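/- Let T be an NSOP_3 complete first-order theory and let p(x) be a partial type over a small model M that is internally NSOP_1. Then p(x) is co-NSOP_1. -/

import Mathlib

namespace NSOP3Paper

open FirstOrder Language

universe u v w w' w₂ x y z

/-- Consistency (equivalently, by compactness over the monster model, finite
satisfiability) of a family of conditions on tuples. -/
def FamConsistent {ι : Type*} {X : Type*} (C : ι → X → Prop) : Prop :=
  ∀ s : Finset ι, ∃ xx : X, ∀ i ∈ s, C i xx

/-- `k`-inconsistency of a family of conditions: any `k` of them (with pairwise
distinct indices) are jointly unsatisfiable. -/
def FamKInconsistent {ι : Type*} {X : Type*} (k : ℕ) (C : ι → X → Prop) : Prop :=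
  ∀ s : Finset ι, s.card = k → ¬∃ xx : X, ∀ i ∈ s, C i xx

/-- Flattening of a family of tuples into a single tuple. -/
def flat {𝕄 : Type w} {ι : Type*} {β : Type*} (a : ι → β → 𝕄) : ι × β → 𝕄 :=
  fun q => a q.1 q.2

/-- A first-order `L`-formula in free variables `α`, together with a tuple of
parameters from `𝕄`; this represents an instance `φ(x̄, b̄)`. -/
structure ParamFormula (L : FirstOrder.Language.{u, v}) (𝕄 : Type w) [L.Structure 𝕄]
    (α : Type w') where
  Params : Type
  toFormula : L.Formula (α ⊕ Params)
  params : Params → 𝕄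

namespace ParamFormula

variable {L : FirstOrder.Language.{u, v}} {𝕄 : Type w} [L.Structure 𝕄] {α : Type w'}

/-- Realization of `φ(x̄, b̄)` at a tuple from `𝕄`. -/
def Realize (φ : ParamFormula L 𝕄 α) (xx : α → 𝕄) : Prop :=
  φ.toFormula.Realize (Sum.elim xx φ.params)

/-- All parameters of `φ` lie in `A`; i.e. `φ ∈ L(A)`. -/
def ParamsIn (φ : ParamFormula L 𝕄 α) (A : Set 𝕄) : Prop :=
  ∀ i, φ.params i ∈ A

/-- Negation of a formula with parameters. -/
protected def not (φ : ParamFormula L 𝕄 α) : ParamFormula L 𝕄 α :=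
  ⟨φ.Params, BoundedFormula.not φ.toFormula, φ.params⟩

/-- Substitute a tuple of elements of `𝕄` for the second group of free variables,
obtaining the instance `φ(x̄, c̄)` as a formula with parameters. -/
def subst {γ : Type} (φ : ParamFormula L 𝕄 (α ⊕ γ)) (c : γ → 𝕄) : ParamFormula L 𝕄 α :=
  ⟨γ ⊕ φ.Params,
    (φ.toFormula).relabel (Sum.elim (Sum.map id Sum.inl) (Sum.inr ∘ Sum.inr)),
    Sum.elim c φ.params⟩

end ParamFormula

section TypesDefs

variable (L : FirstOrder.Language.{u, v}) (𝕄 : Type w) [L.Structure 𝕄]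

/-- Two tuples have the same type over the parameter set `A` (written `b ≡_A b'`). -/
def TpEq (A : Set 𝕄) {β : Type w'} (b b' : β → 𝕄) : Prop :=
  ∀ φ : ParamFormula L 𝕄 β, φ.ParamsIn A → (φ.Realize b ↔ φ.Realize b')

/-- A complete global type in variables `α`: a complete, consistent set of formulas
with parameters from the monster model `𝕄`. -/
structure GlobalType (α : Type w') where
  Mem : ParamFormula L 𝕄 α → Prop
  consistent : ∀ S : Finset (ParamFormula L 𝕄 α), (∀ φ ∈ S, Mem φ) →
    ∃ xx : α → 𝕄, ∀ φ ∈ S, φ.Realize xx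
  complete : ∀ φ : ParamFormula L 𝕄 α, Mem φ ∨ Mem φ.not

/-- A sequence of tuples is indiscernible over the parameter set `A`: any two finite
increasing subtuples of the same length have the same type over `A`. -/
def IndiscernibleOver (A : Set 𝕄) {β : Type w'} (b : ℕ → β → 𝕄) : Prop :=
  ∀ (n : ℕ) (f g : Fin n → ℕ), StrictMono f → StrictMono g →
    TpEq L 𝕄 A (fun q : Fin n × β => b (f q.1) q.2) (fun q : Fin n × β => b (g q.1) q.2)

end TypesDefs

namespace GlobalType

variable {L : FirstOrder.Language.{u, v}} {𝕄 : Type w} [L.Structure 𝕄] {α : Type w'}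

/-- A global type is invariant over `A` if membership of `φ(x̄, b̄)` depends only on
the type of `b̄` over `A`. -/
def InvariantOver (p : GlobalType L 𝕄 α) (A : Set 𝕄) : Prop :=
  ∀ (P : Type) (ψ : L.Formula (α ⊕ P)) (b b' : P → 𝕄),
    TpEq L 𝕄 A b b' → (p.Mem ⟨P, ψ, b⟩ ↔ p.Mem ⟨P, ψ, b'⟩)

/-- A global type is finitely satisfiable in `A` if each of its formulas is satisfied
by a tuple from `A`. -/
def FinSatIn (p : GlobalType L 𝕄 α) (A : Set 𝕄) : Prop :=
  ∀ φ : ParamFormula L 𝕄 α, p.Mem φ → ∃ xx : α → 𝕄, (∀ i, xx i ∈ A) ∧ φ.Realize xx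

/-- `a ⊨ p|_B` : the tuple `a` realizes the restriction of the global type `p` to the
parameter set `B`. -/
def RealizesOver (p : GlobalType L 𝕄 α) (B : Set 𝕄) (a : α → 𝕄) : Prop :=
  ∀ φ : ParamFormula L 𝕄 α, p.Mem φ → φ.ParamsIn B → φ.Realize a

/-- `(b i)` is a Morley sequence in `p` over `A`: each `b i ⊨ p|_{A b_{<i}}`. -/
def IsMorleyOver (p : GlobalType L 𝕄 α) (A : Set 𝕄) (b : ℕ → α → 𝕄) : Prop :=
  ∀ i : ℕ, p.RealizesOver (A ∪ ⋃ j ∈ Set.Iio i, Set.range (b j)) (b i)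

end GlobalType

section MorleyDefs

variable (L : FirstOrder.Language.{u, v}) (𝕄 : Type w) [L.Structure 𝕄]

/-- `(b i)` is an invariant Morley sequence over `A`: a Morley sequence in some global
type invariant over `A`. -/
def IsInvMorleyOver (A : Set 𝕄) {α : Type w'} (b : ℕ → α → 𝕄) : Prop :=
  ∃ p : GlobalType L 𝕄 α, p.InvariantOver A ∧ p.IsMorleyOver A b

/-- `(b i)` is a coheir Morley sequence over `A`: a Morley sequence in some global
type finitely satisfiable in `A`. -/
def IsCoheirMorleyOver (A : Set 𝕄) {α : Type w'} (b : ℕ → α → 𝕄) : Prop :=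
  ∃ p : GlobalType L 𝕄 α, p.FinSatIn A ∧ p.IsMorleyOver A b

end MorleyDefs

namespace ParamFormula

variable {L : FirstOrder.Language.{u, v}} {𝕄 : Type w} [L.Structure 𝕄] {α : Type w'}

/-- `φ(x̄, b̄)` Kim-divides over `A`: some invariant Morley sequence over `A` starting
with `b̄` makes the corresponding instances inconsistent. -/
def KimDividesOver (φ : ParamFormula L 𝕄 α) (A : Set 𝕄) : Prop :=
  ∃ b : ℕ → φ.Params → 𝕄, b 0 = φ.params ∧ IsInvMorleyOver L 𝕄 A b ∧
    ¬FamConsistent fun (i : ℕ) (xx : α → 𝕄) => φ.toFormula.Realize (Sum.elim xx (b i))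

/-- `φ(x̄, b̄)` Conant-divides over `A`: every invariant Morley sequence over `A`
starting with `b̄` makes the corresponding instances inconsistent. -/
def ConantDividesOver (φ : ParamFormula L 𝕄 α) (A : Set 𝕄) : Prop :=
  ∀ b : ℕ → φ.Params → 𝕄, b 0 = φ.params → IsInvMorleyOver L 𝕄 A b →
    ¬FamConsistent fun (i : ℕ) (xx : α → 𝕄) => φ.toFormula.Realize (Sum.elim xx (b i))

/-- `φ(x̄, b̄)` divides over `A`: some `A`-indiscernible sequence starting with `b̄`
makes the corresponding instances inconsistent. -/
def DividesOver (φ : ParamFormula L 𝕄 α) (A : Set 𝕄) : Prop :=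
  ∃ b : ℕ → φ.Params → 𝕄, b 0 = φ.params ∧ IndiscernibleOver L 𝕄 A b ∧
    ¬FamConsistent fun (i : ℕ) (xx : α → 𝕄) => φ.toFormula.Realize (Sum.elim xx (b i))

/-- `φ` Kim-forks over `A`: it implies a finite disjunction of formulas Kim-dividing
over `A`. -/
def KimForksOver (φ : ParamFormula L 𝕄 α) (A : Set 𝕄) : Prop :=
  ∃ (k : ℕ) (ψ : Fin k → ParamFormula L 𝕄 α), (∀ j, (ψ j).KimDividesOver A) ∧
    ∀ xx : α → 𝕄, φ.Realize xx → ∃ j, (ψ j).Realize xx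

/-- `φ` Conant-forks over `A`: it implies a finite disjunction of formulas
Conant-dividing over `A`. -/
def ConantForksOver (φ : ParamFormula L 𝕄 α) (A : Set 𝕄) : Prop :=
  ∃ (k : ℕ) (ψ : Fin k → ParamFormula L 𝕄 α), (∀ j, (ψ j).ConantDividesOver A) ∧
    ∀ xx : α → 𝕄, φ.Realize xx → ∃ j, (ψ j).Realize xx

/-- `φ` forks over `A`: it implies a finite disjunction of formulas dividing over `A`. -/
def ForksOver (φ : ParamFormula L 𝕄 α) (A : Set 𝕄) : Prop :=
  ∃ (k : ℕ) (ψ : Fin k → ParamFormula L 𝕄 α), (∀ j, (ψ j).DividesOver A) ∧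
    ∀ xx : α → 𝕄, φ.Realize xx → ∃ j, (ψ j).Realize xx

end ParamFormula

section IndDefs

variable (L : FirstOrder.Language.{u, v}) (𝕄 : Type w) [L.Structure 𝕄]

/-- `a ⫝^K_A B` : `tp(a/A ∪ B)` contains no formula Kim-forking over `A`. -/
def IndKim (A B : Set 𝕄) {γ : Type w'} (a : γ → 𝕄) : Prop :=
  ∀ φ : ParamFormula L 𝕄 γ, φ.ParamsIn (A ∪ B) → φ.Realize a → ¬φ.KimForksOver A

/-- `a ⫝^{Kd}_A B` : `tp(a/A ∪ B)` contains no formula Kim-dividing over `A`. -/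
def IndKd (A B : Set 𝕄) {γ : Type w'} (a : γ → 𝕄) : Prop :=
  ∀ φ : ParamFormula L 𝕄 γ, φ.ParamsIn (A ∪ B) → φ.Realize a → ¬φ.KimDividesOver A

/-- `a ⫝^{K*}_A B` : Conant-independence. -/
def IndConant (A B : Set 𝕄) {γ : Type w'} (a : γ → 𝕄) : Prop :=
  ∀ φ : ParamFormula L 𝕄 γ, φ.ParamsIn (A ∪ B) → φ.Realize a → ¬φ.ConantForksOver A

/-- `a ⫝^{K*d}_A B` : Conant-dividing independence. -/
def IndConantD (A B : Set 𝕄) {γ : Type w'} (a : γ → 𝕄) : Prop :=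
  ∀ φ : ParamFormula L 𝕄 γ, φ.ParamsIn (A ∪ B) → φ.Realize a → ¬φ.ConantDividesOver A

/-- `a ⫝^f_A B` : forking-independence. -/
def IndForking (A B : Set 𝕄) {γ : Type w'} (a : γ → 𝕄) : Prop :=
  ∀ φ : ParamFormula L 𝕄 γ, φ.ParamsIn (A ∪ B) → φ.Realize a → ¬φ.ForksOver A

/-- `a ⫝^i_A B` : `tp(a/A ∪ B)` extends to a global type invariant over `A`. -/
def IndInv (A B : Set 𝕄) {γ : Type w'} (a : γ → 𝕄) : Prop :=
  ∃ p : GlobalType L 𝕄 γ, p.InvariantOver A ∧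
    ∀ φ : ParamFormula L 𝕄 γ, φ.ParamsIn (A ∪ B) → φ.Realize a → p.Mem φ

/-- `a ⫝^u_A B` : `tp(a/A ∪ B)` extends to a global type finitely satisfiable in `A`. -/
def IndFinSat (A B : Set 𝕄) {γ : Type w'} (a : γ → 𝕄) : Prop :=
  ∃ p : GlobalType L 𝕄 γ, p.FinSatIn A ∧
    ∀ φ : ParamFormula L 𝕄 γ, φ.ParamsIn (A ∪ B) → φ.Realize a → p.Mem φ

/-- `a ⫝^{K+}_A b` : there is an invariant Morley sequence over `A` starting with `b`
that is indiscernible over `A ∪ a`. -/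
def IndKPlus (A : Set 𝕄) {δ : Type w'} {γ : Type w₂} (b : δ → 𝕄) (a : γ → 𝕄) : Prop :=
  ∃ bs : ℕ → δ → 𝕄, bs 0 = b ∧ IsInvMorleyOver L 𝕄 A bs ∧
    IndiscernibleOver L 𝕄 (A ∪ Set.range a) bs

/-- `a ⫝^{K+u}_A b` : there is a coheir Morley sequence over `A` starting with `b`
that is indiscernible over `A ∪ a`. -/
def IndKPlusU (A : Set 𝕄) {δ : Type w'} {γ : Type w₂} (b : δ → 𝕄) (a : γ → 𝕄) : Prop :=
  ∃ bs : ℕ → δ → 𝕄, bs 0 = b ∧ IsCoheirMorleyOver L 𝕄 A bs ∧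
    IndiscernibleOver L 𝕄 (A ∪ Set.range a) bs

/-- Conant-independence `⫝^{K*}` is symmetric (over every small model). -/
def ConantSymmetric : Prop :=
  ∀ (M : L.ElementarySubstructure 𝕄) (γ δ : Type w) (a : γ → 𝕄) (b : δ → 𝕄),
    IndConant L 𝕄 (M : Set 𝕄) (Set.range b) a → IndConant L 𝕄 (M : Set 𝕄) (Set.range a) b

/-- Conant-dividing independence `⫝^{K*d}` is symmetric. -/
def ConantDSymmetric : Prop :=
  ∀ (M : L.ElementarySubstructure 𝕄) (γ δ : Type w) (a : γ → 𝕄) (b : δ → 𝕄),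
    IndConantD L 𝕄 (M : Set 𝕄) (Set.range b) a → IndConantD L 𝕄 (M : Set 𝕄) (Set.range a) b

/-- The relation `⫝^{K+}` is symmetric. -/
def KPlusSymmetric : Prop :=
  ∀ (M : L.ElementarySubstructure 𝕄) (γ δ : Type w) (a : γ → 𝕄) (b : δ → 𝕄),
    IndKPlus L 𝕄 (M : Set 𝕄) b a → IndKPlus L 𝕄 (M : Set 𝕄) a b

/-- Forking-independence satisfies the chain condition with respect to invariant
Morley sequences. -/
def ChainConditionF : Prop :=
  ∀ (M : L.ElementarySubstructure 𝕄) (γ δ : Type w) (a : γ → 𝕄) (bs : ℕ → δ → 𝕄),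
    IsInvMorleyOver L 𝕄 (M : Set 𝕄) bs →
    IndForking L 𝕄 (M : Set 𝕄) (Set.range (bs 0)) a →
    ∃ bs' : ℕ → δ → 𝕄,
      TpEq L 𝕄 ((M : Set 𝕄) ∪ Set.range (bs 0)) (flat bs') (flat bs) ∧
      IndiscernibleOver L 𝕄 ((M : Set 𝕄) ∪ Set.range a) bs' ∧
      IndForking L 𝕄 (M : Set 𝕄) (Set.range (flat bs')) a

/-- Kim-independence satisfies the chain condition with respect to invariant Morley
sequences. -/
def ChainConditionK : Prop :=
  ∀ (M : L.ElementarySubstructure 𝕄) (γ δ : Type w) (a : γ → 𝕄) (bs : ℕ → δ → 𝕄),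
    IsInvMorleyOver L 𝕄 (M : Set 𝕄) bs →
    IndKim L 𝕄 (M : Set 𝕄) (Set.range (bs 0)) a →
    ∃ bs' : ℕ → δ → 𝕄,
      TpEq L 𝕄 ((M : Set 𝕄) ∪ Set.range (bs 0)) (flat bs') (flat bs) ∧
      IndiscernibleOver L 𝕄 ((M : Set 𝕄) ∪ Set.range a) bs' ∧
      IndKim L 𝕄 (M : Set 𝕄) (Set.range (flat bs')) a

/-- `T` is NSOP₃: there is no definable binary relation on tuples with no 3-cycles
containing an infinite chain. -/
def IsNSOP3 : Prop :=
  ¬∃ (m : ℕ) (R : ParamFormula L 𝕄 (Fin m ⊕ Fin m)) (a : ℕ → Fin m → 𝕄),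
    (∀ i j : ℕ, i < j → R.Realize (Sum.elim (a i) (a j))) ∧
    ¬∃ x1 x2 x3 : Fin m → 𝕄,
      R.Realize (Sum.elim x1 x2) ∧ R.Realize (Sum.elim x2 x3) ∧ R.Realize (Sum.elim x3 x1)

/-- `𝕄` is a `κ`-monster: every consistent type in fewer than `κ` variables over a
parameter set of size less than `κ` is realized. -/
class IsMonster (κ : Cardinal.{w}) : Prop where
  saturated : ∀ {α : Type w} (A : Set 𝕄) (S : Set (ParamFormula L 𝕄 α)),
    Cardinal.mk α < κ → Cardinal.mk A < κ → (∀ φ ∈ S, φ.ParamsIn A) →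
    (∀ S₀ : Finset (ParamFormula L 𝕄 α), (∀ φ ∈ S₀, φ ∈ S) →
      ∃ xx : α → 𝕄, ∀ φ ∈ S₀, φ.Realize xx) →
    ∃ xx : α → 𝕄, ∀ φ ∈ S, φ.Realize xx

/-- A tuple realizes the partial type `P`. -/
def RealizesPType {nv : ℕ} (P : Set (ParamFormula L 𝕄 (Fin nv))) (a : Fin nv → 𝕄) : Prop :=
  ∀ φ ∈ P, φ.Realize a

/-- `p(x̄)` is co-NSOP₁: no `L(M)`-formula `φ(x̄, ȳ)` and tree of tuples of
realizations of `p` witness SOP₁-style consistency/inconsistency. -/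
def CoNSOP1 (M : Set 𝕄) {nv : ℕ} (P : Set (ParamFormula L 𝕄 (Fin nv))) : Prop :=
  ¬∃ (k m : ℕ) (φ : ParamFormula L 𝕄 (Fin k ⊕ (Fin m × Fin nv)))
      (b : List Bool → Fin m → Fin nv → 𝕄),
    φ.ParamsIn M ∧
    (∀ η j, RealizesPType L 𝕄 P (b η j)) ∧
    (∀ σ : ℕ → Bool, FamConsistent fun (n : ℕ) (xx : Fin k → 𝕄) =>
      (φ.subst (flat (b (List.ofFn fun i : Fin n => σ i)))).Realize xx) ∧
    (∀ η₁ η₂ : List Bool, (η₁ ++ [false]) <+: η₂ →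
      ¬∃ xx : Fin k → 𝕄, (φ.subst (flat (b η₂))).Realize xx ∧
        (φ.subst (flat (b (η₁ ++ [true])))).Realize xx)

/-- The set of realizations of the partial type `P`. -/
def PRealizations {nv : ℕ} (P : Set (ParamFormula L 𝕄 (Fin nv))) : Type w :=
  { a : Fin nv → 𝕄 // RealizesPType L 𝕄 P a }

/-- The language `L_p` associated to a partial `nv`-type: an `m`-ary relation symbol
for each `L(M)`-formula in `m` groups of `nv` variables. -/
def pLang (M : Set 𝕄) (nv : ℕ) : Language :=
  ⟨fun _ => Empty, fun m => { φ : ParamFormula L 𝕄 (Fin m × Fin nv) // φ.ParamsIn M }⟩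

/-- The structure `M_p` on the set of realizations of `p`, with relations interpreted
by the corresponding formulas in `𝕄`. -/
instance pStruct (M : Set 𝕄) {nv : ℕ} (P : Set (ParamFormula L 𝕄 (Fin nv))) :
    (pLang L 𝕄 M nv).Structure (PRealizations L 𝕄 P) where
  funMap := fun {n} f _ => f.elim
  RelMap := fun {m} R xs => R.1.Realize fun q : Fin m × Fin nv => (xs q.1).1 q.2

end IndDefs

/-- An SOP₁ pattern witnessed inside the structure `W`. -/
def SOP1PatternIn (L' : FirstOrder.Language.{x, y}) (W : Type z) [L'.Structure W] : Prop :=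
  ∃ (k n : ℕ) (φ : L'.Formula (Fin k ⊕ Fin n)) (bt : List Bool → Fin n → W),
    (∀ σ : ℕ → Bool, FamConsistent fun (i : ℕ) (xx : Fin k → W) =>
      φ.Realize (Sum.elim xx (bt (List.ofFn fun j : Fin i => σ j)))) ∧
    (∀ η₁ η₂ : List Bool, (η₁ ++ [false]) <+: η₂ →
      ¬∃ xx : Fin k → W, φ.Realize (Sum.elim xx (bt η₂)) ∧
        φ.Realize (Sum.elim xx (bt (η₁ ++ [true]))))

/-- The complete theory of `N` is NSOP₁: no SOP₁ pattern in any elementarily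
equivalent structure. -/
def IsNSOP1Th (L' : FirstOrder.Language.{x, y}) (N : Type z) [L'.Structure N] : Prop :=
  ¬∃ (W : Type (max x y z)) (S : L'.Structure W),
    L'.completeTheory N = @Language.completeTheory L' W S ∧ @SOP1PatternIn L' W S

/-- The formula `φ(x̄, ȳ)` has the tree property, witnessed in `W`. -/
def FormulaTPIn (L' : FirstOrder.Language.{x, y}) (W : Type z) [L'.Structure W]
    {k n : ℕ} (φ : L'.Formula (Fin k ⊕ Fin n)) : Prop :=
  ∃ (kk : ℕ) (bt : List ℕ → Fin n → W),
    (∀ σ : ℕ → ℕ, FamConsistent fun (i : ℕ) (xx : Fin k → W) =>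
      φ.Realize (Sum.elim xx (bt (List.ofFn fun j : Fin i => σ j)))) ∧
    (∀ η : List ℕ, FamKInconsistent kk fun (j : ℕ) (xx : Fin k → W) =>
      φ.Realize (Sum.elim xx (bt (η ++ [j]))))

/-- The formula `φ(x̄, ȳ)` has SOP₁, witnessed in `W`. -/
def FormulaSOP1In (L' : FirstOrder.Language.{x, y}) (W : Type z) [L'.Structure W]
    {k n : ℕ} (φ : L'.Formula (Fin k ⊕ Fin n)) : Prop :=
  ∃ bt : List Bool → Fin n → W,
    (∀ σ : ℕ → Bool, FamConsistent fun (i : ℕ) (xx : Fin k → W) =>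
      φ.Realize (Sum.elim xx (bt (List.ofFn fun j : Fin i => σ j)))) ∧
    (∀ η₁ η₂ : List Bool, (η₁ ++ [false]) <+: η₂ →
      ¬∃ xx : Fin k → W, φ.Realize (Sum.elim xx (bt η₂)) ∧
        φ.Realize (Sum.elim xx (bt (η₁ ++ [true]))))

/-- Longest common prefix (meet in the tree `2^{<ω}`). -/
def meet : List Bool → List Bool → List Bool
  | a :: as, b :: bs => if a = b then a :: meet as bs else []
  | _, _ => []

/-- Strict tree order (strict prefix) on `2^{<ω}`. -/
def StrictPrefix (η ν : List Bool) : Prop := η <+: ν ∧ η ≠ ν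

/-- Lexicographic order on `2^{<ω}`. -/
def LexLt (η ν : List Bool) : Prop :=
  StrictPrefix η ν ∨ ((meet η ν ++ [false]) <+: η ∧ (meet η ν ++ [true]) <+: ν)

/-- The meet `c 0 ∧ … ∧ c k`. -/
def meetInit (c : ℕ → List Bool) : ℕ → List Bool
  | 0 => c 0
  | k + 1 => meet (meetInit c k) (c (k + 1))

/-- `c 0, …, c (l-1)` is a descending comb: a lexicographically increasing antichain
whose successive meets form a strictly descending chain in the tree order. -/
def IsDescendingComb (l : ℕ) (c : ℕ → List Bool) : Prop :=
  (∀ i j, i < l → j < l → i ≠ j → ¬(c i <+: c j)) ∧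
  (∀ i j, i < j → j < l → LexLt (c i) (c j)) ∧
  (∀ k, k + 1 < l → StrictPrefix (meetInit c (k + 1)) (meetInit c k))

section DCTP

variable (L : FirstOrder.Language.{u, v}) (𝕄 : Type w) [L.Structure 𝕄]

/-- `T` has `k`-DCTP₂. -/
def HasKDCTP2 (k : ℕ) : Prop :=
  ∃ (kx ny : ℕ) (φ : ParamFormula L 𝕄 (Fin kx ⊕ Fin ny)) (b : List Bool → Fin ny → 𝕄),
    (∀ σ : ℕ → Bool, FamKInconsistent k fun (n : ℕ) (xx : Fin kx → 𝕄) =>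
      (φ.subst (b (List.ofFn fun i : Fin n => σ i))).Realize xx) ∧
    (∀ (l : ℕ) (c : ℕ → List Bool), IsDescendingComb l c →
      ∃ xx : Fin kx → 𝕄, ∀ i < l, (φ.subst (b (c i))).Realize xx)

/-- `T` is N-ω-DCTP₂: it does not have `k`-DCTP₂ for any `k`. -/
def NOmegaDCTP2 : Prop := ∀ k : ℕ, ¬HasKDCTP2 L 𝕄 k

/-- A generic triple of sets of realizations of three partial types: the three sets
begin mutually indiscernible invariant Morley sequences over `M`. -/
def GenericTriple (M : Set 𝕄) {ι₁ ι₂ ι₃ : Type w} {nv₁ nv₂ nv₃ : ℕ}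
    (A : ι₁ → Fin nv₁ → 𝕄) (B : ι₂ → Fin nv₂ → 𝕄) (C : ι₃ → Fin nv₃ → 𝕄) : Prop :=
  ∃ (IA : ℕ → ι₁ → Fin nv₁ → 𝕄) (IB : ℕ → ι₂ → Fin nv₂ → 𝕄) (IC : ℕ → ι₃ → Fin nv₃ → 𝕄),
    IA 0 = A ∧ IB 0 = B ∧ IC 0 = C ∧
    IsInvMorleyOver L 𝕄 M (fun i => flat (IA i)) ∧
    IsInvMorleyOver L 𝕄 M (fun i => flat (IB i)) ∧
    IsInvMorleyOver L 𝕄 M (fun i => flat (IC i)) ∧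
    IndiscernibleOver L 𝕄
      (M ∪ Set.range (flat fun i => flat (IB i)) ∪ Set.range (flat fun i => flat (IC i)))
      (fun i => flat (IA i)) ∧
    IndiscernibleOver L 𝕄
      (M ∪ Set.range (flat fun i => flat (IA i)) ∪ Set.range (flat fun i => flat (IC i)))
      (fun i => flat (IB i)) ∧
    IndiscernibleOver L 𝕄
      (M ∪ Set.range (flat fun i => flat (IA i)) ∪ Set.range (flat fun i => flat (IB i)))
      (fun i => flat (IC i))

end DCTP

/-- The language of hypergraph sequences: one `n`-ary relation symbol for each `n`. -/
def hgLang : FirstOrder.Language.{0, 0} := ⟨fun _ => Empty, fun _ => PUnit⟩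

section Hypergraph

variable (V : Type z) [hgLang.Structure V]

/-- The `n`-ary edge relation of a hypergraph sequence. -/
def hgRel {n : ℕ} (v : Fin n → V) : Prop :=
  @Structure.RelMap hgLang V _ n PUnit.unit v

/-- A family of vertices is a clique: every tuple of its members is an edge. -/
def IsClique {ι : Type*} (a : ι → V) : Prop :=
  ∀ (n : ℕ) (f : Fin n → ι), hgRel V fun j => a (f j)

/-- A family of vertices is a `k`-anticlique: no `k`-tuple of its members (with
pairwise distinct indices) is an edge. -/
def IsAnticlique (k : ℕ) {ι : Type*} (a : ι → V) : Prop :=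
  ∀ f : Fin k → ι, Function.Injective f → ¬hgRel V fun j => a (f j)

/-- The hypergraph sequence has MTP. -/
def HasMTP : Prop :=
  ∃ (k : ℕ) (bt : List ℕ → V),
    (∀ σ : ℕ → ℕ, IsClique V fun n : ℕ => bt (List.ofFn fun j : Fin n => σ j)) ∧
    (∀ η : List ℕ, IsAnticlique V k fun n : ℕ => bt (η ++ [n]))

/-- The hypergraph sequence has an `(ω, ω, 1)`-array. -/
def HasOmegaArray : Prop :=
  ∃ (k : ℕ) (bt : ℕ → ℕ → V),
    (∀ i : ℕ, IsClique V (bt i)) ∧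
    (∀ σ : ℕ → ℕ, IsAnticlique V k fun i : ℕ => bt i (σ i))

/-- The hypergraph sequence has MSOP₁. -/
def HasMSOP1 : Prop :=
  ∃ bt : List Bool → V,
    (∀ σ : ℕ → Bool, IsClique V fun n : ℕ => bt (List.ofFn fun j : Fin n => σ j)) ∧
    (∀ η₁ η₂ : List Bool, (η₁ ++ [false]) <+: η₂ →
      IsAnticlique V 2 ![bt η₂, bt (η₁ ++ [true])])

/-- The hypergraph sequence has ω-MDCTP₂. -/
def HasOmegaMDCTP2 : Prop :=
  ∃ (k : ℕ) (bt : List Bool → V),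
    (∀ σ : ℕ → Bool, IsAnticlique V k fun n : ℕ => bt (List.ofFn fun j : Fin n => σ j)) ∧
    (∀ (l : ℕ) (c : ℕ → List Bool), IsDescendingComb l c →
      IsClique V fun i : Fin l => bt (c i))

/-- The hypergraph sequence has the compatible order property. -/
def HasCompatibleOrderProperty : Prop :=
  ∃ c d : ℕ → V,
    (∀ m n : ℕ, m < n →
      IsClique V fun i : Fin (n + 1) => if (i : ℕ) ≤ m then d i else c i) ∧
    (∀ m n : ℕ, m < n → ¬hgRel V ![c m, d n])

end Hypergraph

section DefinableSpaces

/-- A space identified with a finite cartesian power of `N`. -/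
class DSpace (N : Type w) (X : Type w) where
  ix : Type
  fin : Finite ix
  e : X ≃ (ix → N)

attribute [instance] DSpace.fin

variable (L : FirstOrder.Language.{x, y}) (N : Type w) [L.Structure N]

instance dspaceSelf : DSpace N N := ⟨Unit, inferInstance, (Equiv.funUnique Unit N).symm⟩

instance dspacePUnit : DSpace N PUnit.{w + 1} :=
  ⟨Empty, inferInstance, ⟨fun _ a => a.elim, fun _ => PUnit.unit, fun _ => rfl,
    fun _ => funext fun a => a.elim⟩⟩

instance dspaceProd {X Y : Type w} [DSpace N X] [DSpace N Y] : DSpace N (X × Y) :=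
  ⟨DSpace.ix N X ⊕ DSpace.ix N Y, inferInstance,
    (Equiv.prodCongr DSpace.e DSpace.e).trans (Equiv.sumArrowEquivProdArrow _ _ _).symm⟩

instance dspacePi {X : Type w} [DSpace N X] (m : ℕ) : DSpace N (Fin m → X) :=
  ⟨Fin m × DSpace.ix N X, inferInstance,
    (Equiv.piCongrRight fun _ => DSpace.e (N := N)).trans (Equiv.curry _ _ _).symm⟩

theorem dspace_prod_inl {X Y : Type w} [DSpace N X] [DSpace N Y] (q : X × Y)
    (i : DSpace.ix N X) :
    (DSpace.e (N := N) q) (Sum.inl i) = DSpace.e (N := N) q.1 i := rfl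

theorem dspace_prod_inr {X Y : Type w} [DSpace N X] [DSpace N Y] (q : X × Y)
    (i : DSpace.ix N Y) :
    (DSpace.e (N := N) q) (Sum.inr i) = DSpace.e (N := N) q.2 i := rfl

theorem dspace_pi {X : Type w} [DSpace N X] {m : ℕ} (q : Fin m → X)
    (i : Fin m) (j : DSpace.ix N X) :
    (DSpace.e (N := N) q) (i, j) = DSpace.e (N := N) (q i) j := rfl

/-- Maps each of whose coordinates is a coordinate of the source or a constant. -/
@[fun_prop]
def DMap {X Y : Type w} [DSpace N X] [DSpace N Y] (f : X → Y) : Prop :=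
  ∀ j : DSpace.ix N Y, (∃ i : DSpace.ix N X, ∀ a, DSpace.e (N := N) (f a) j = DSpace.e (N := N) a i) ∨
    ∃ c : N, ∀ a, DSpace.e (N := N) (f a) j = c

variable {X Y Z W : Type w} [DSpace N X] [DSpace N Y] [DSpace N Z] [DSpace N W]

@[fun_prop]
theorem DMap.id' : DMap N (fun a : X => a) := fun j => Or.inl ⟨j, fun _ => rfl⟩

@[fun_prop]
theorem DMap.const (c : Y) : DMap N (fun _ : X => c) := fun _ => Or.inr ⟨_, fun _ => rfl⟩

@[fun_prop]
theorem DMap.comp {g : Y → Z} {f : X → Y} (hg : DMap N g) (hf : DMap N f) :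
    DMap N (fun a => g (f a)) := by
  intro j
  rcases hg j with ⟨i, hi⟩ | ⟨c, hc⟩
  · rcases hf i with ⟨i', hi'⟩ | ⟨c, hc⟩
    · exact Or.inl ⟨i', fun a => by rw [hi, hi']⟩
    · exact Or.inr ⟨c, fun a => by rw [hi, hc]⟩
  · exact Or.inr ⟨c, fun a => hc _⟩

@[fun_prop]
theorem DMap.fst {f : X → Y × Z} (hf : DMap N f) : DMap N (fun a => (f a).1) :=
  fun j => hf (Sum.inl j)

@[fun_prop]
theorem DMap.snd {f : X → Y × Z} (hf : DMap N f) : DMap N (fun a => (f a).2) :=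
  fun j => hf (Sum.inr j)

@[fun_prop]
theorem DMap.prodMk {f : X → Y} {g : X → Z} (hf : DMap N f) (hg : DMap N g) :
    DMap N (fun a => (f a, g a)) := by
  rintro (j | j)
  · exact hf j
  · exact hg j

@[fun_prop]
theorem DMap.pi {m : ℕ} {f : X → Fin m → Y} (hf : ∀ i, DMap N (fun a => f a i)) :
    DMap N (fun a i => f a i) := by
  rintro ⟨i, j⟩
  exact hf i j

@[fun_prop]
theorem DMap.proj {m : ℕ} (i : Fin m) : DMap N (fun a : Fin m → Y => a i) :=
  fun j => Or.inl ⟨(i, j), fun _ => rfl⟩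

theorem DMap.apply {m : ℕ} {f : X → Fin m → Y} (hf : DMap N f) (i : Fin m) :
    DMap N (fun a => f a i) := fun j => hf (i, j)

/-- Predicates definable with parameters. -/
def DP (p : X → Prop) : Prop :=
  ∃ φ : L.Formula (N ⊕ DSpace.ix N X), ∀ a, p a ↔ φ.Realize (Sum.elim id (DSpace.e (N := N) a))

variable {L N}

theorem DP.congr {p q : X → Prop} (hp : DP L N p) (h : ∀ a, q a ↔ p a) : DP L N q := by
  obtain ⟨φ, hφ⟩ := hp
  exact ⟨φ, fun a => (h a).trans (hφ a)⟩

theorem DP.not {p : X → Prop} (hp : DP L N p) : DP L N (fun a => ¬ p a) := by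
  obtain ⟨φ, hφ⟩ := hp
  exact ⟨φ.not, fun a => by simp only [hφ, Formula.realize_not]⟩

theorem DP.and {p q : X → Prop} (hp : DP L N p) (hq : DP L N q) :
    DP L N (fun a => p a ∧ q a) := by
  obtain ⟨φ, hφ⟩ := hp
  obtain ⟨ψ, hψ⟩ := hq
  exact ⟨φ ⊓ ψ, fun a => by simp only [hφ, hψ, Formula.realize_inf]⟩

theorem DP.forallFin {ι : Type*} [Finite ι] {p : ι → X → Prop} (hp : ∀ i, DP L N (p i)) :
    DP L N (fun a => ∀ i, p i a) := by
  choose φ hφ using hp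
  exact ⟨Formula.iInf φ, fun a => by simp [Formula.realize_iInf, hφ]⟩

theorem DP.comp {p : Y → Prop} (hp : DP L N p) {f : X → Y} (hf : DMap N f) :
    DP L N (fun a => p (f a)) := by
  obtain ⟨φ, hφ⟩ := hp
  have : ∀ j : DSpace.ix N Y, ∃ t : N ⊕ DSpace.ix N X,
      ∀ a, DSpace.e (N := N) (f a) j = Sum.elim id (DSpace.e (N := N) a) t := by
    intro j
    rcases hf j with ⟨i, hi⟩ | ⟨c, hc⟩
    · exact ⟨Sum.inr i, hi⟩
    · exact ⟨Sum.inl c, hc⟩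
  choose t ht using this
  refine ⟨φ.relabel (Sum.elim Sum.inl t), fun a => ?_⟩
  simp only [hφ]
  rw [Formula.realize_relabel]
  apply iff_of_eq
  congr 1
  funext k
  rcases k with k | k
  · rfl
  · exact ht k a

theorem DP.ex {p : X → Y → Prop} (hp : DP L N (fun q : X × Y => p q.1 q.2)) :
    DP L N (fun a => ∃ b, p a b) := by
  obtain ⟨φ, hφ⟩ := hp
  refine ⟨Formula.iExs (DSpace.ix N Y) (φ.relabel
    (Sum.elim (fun n => Sum.inl (Sum.inl n))
      (Sum.elim (fun i => Sum.inl (Sum.inr i)) Sum.inr))), fun a => ?_⟩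
  rw [Formula.realize_iExs]
  constructor
  · rintro ⟨b, hb⟩
    refine ⟨DSpace.e b, ?_⟩
    rw [Formula.realize_relabel]
    refine (iff_of_eq (congrArg φ.Realize ?_)).1 ((hφ (a, b)).1 hb)
    funext k
    rcases k with k | k | k <;> rfl
  · rintro ⟨i, hi⟩
    refine ⟨DSpace.e.symm i, (hφ (a, DSpace.e.symm i)).2 ?_⟩
    rw [Formula.realize_relabel] at hi
    refine (iff_of_eq (congrArg φ.Realize ?_)).1 hi
    funext k
    rcases k with k | k | k
    · rfl
    · rfl
    · change i k = DSpace.e (N := N) (DSpace.e.symm i) k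
      simp

theorem DP.or {p q : X → Prop} (hp : DP L N p) (hq : DP L N q) :
    DP L N (fun a => p a ∨ q a) :=
  ((hp.not.and hq.not).not).congr fun a => by tauto

theorem DP.imp {p q : X → Prop} (hp : DP L N p) (hq : DP L N q) :
    DP L N (fun a => p a → q a) :=
  ((hp.and hq.not).not).congr fun a => by tauto

theorem DP.all {p : X → Y → Prop} (hp : DP L N (fun q : X × Y => p q.1 q.2)) :
    DP L N (fun a => ∀ b, p a b) := by
  have := (DP.ex (p := fun a b => ¬ p a b) hp.not).not
  exact this.congr fun a => by simp

theorem DP.true' : DP L N (fun _ : X => True) :=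
  ⟨⊤, fun a => by simp⟩

theorem DP.const (c : Prop) : DP L N (fun _ : X => c) := by
  by_cases h : c
  · exact DP.true'.congr fun a => by simp [h]
  · exact DP.true'.not.congr fun a => by simp [h]

theorem DP.eqN {i j : DSpace.ix N X} :
    DP L N (fun a : X => DSpace.e (N := N) a i = DSpace.e (N := N) a j) :=
  ⟨(Term.var (Sum.inr i)).equal (Term.var (Sum.inr j)), fun a => by
    simp [Formula.realize_equal]⟩

theorem DP.eq : DP L N (fun q : X × X => q.1 = q.2) := by
  have := DP.forallFin (L := L) (p := fun (i : DSpace.ix N X) (q : X × X) =>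
    DSpace.e (N := N) q (Sum.inl i) = DSpace.e (N := N) q (Sum.inr i)) (fun i => DP.eqN)
  refine this.congr fun a => ?_
  rw [← (DSpace.e (N := N) (X := X)).injective.eq_iff]
  exact funext_iff

/-- Binary version. -/
def DP2 (L : FirstOrder.Language.{x, y}) (N : Type w) [L.Structure N] {X Y : Type w}
    [DSpace N X] [DSpace N Y] (ρ : X → Y → Prop) : Prop :=
  DP L N (fun q : X × Y => ρ q.1 q.2)

theorem DP2.mk {ρ : X → Y → Prop} (h : DP L N (fun q : X × Y => ρ q.1 q.2)) : DP2 L N ρ := h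

theorem DP2.comp {ρ : X → Y → Prop} (h : DP2 L N ρ) {f : Z → X} {g : Z → Y}
    (hf : DMap N f) (hg : DMap N g) : DP L N (fun c => ρ (f c) (g c)) :=
  DP.comp (p := fun q : X × Y => ρ q.1 q.2) h (f := fun c => (f c, g c)) (hf.prodMk N hg)

theorem DP.ex' {p : X → Y → Prop} (hp : DP2 L N p) : DP L N (fun a => ∃ b, p a b) := DP.ex hp

end DefinableSpaces

section Ultra

variable {X : Type*} {Y : Type*} {Z : Type*}

open Filter

/-- Tensor product of ultrafilters (the first factor is the outer one). -/
noncomputable def tens (F : Ultrafilter X) (G : Ultrafilter Y) : Ultrafilter (X × Y) :=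
  F.bind fun a => G.map (Prod.mk a)

theorem ev_bind {F : Ultrafilter X} {G : X → Ultrafilter Y} {p : Y → Prop} :
    (∀ᶠ q in F.bind G, p q) ↔ ∀ᶠ a in F, ∀ᶠ b in G a, p b := by
  change {q | p q} ∈ Filter.bind (F : Filter X) (fun a => (G a : Filter Y)) ↔ _
  rw [Filter.mem_bind']
  rfl

@[simp]
theorem ev_map {F : Ultrafilter X} {f : X → Y} {p : Y → Prop} :
    (∀ᶠ q in F.map f, p q) ↔ ∀ᶠ a in F, p (f a) := Iff.rfl

@[simp]
theorem ev_tens {F : Ultrafilter X} {G : Ultrafilter Y} {p : X × Y → Prop} :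
    (∀ᶠ q in tens F G, p q) ↔ ∀ᶠ a in F, ∀ᶠ b in G, p (a, b) := by
  unfold tens
  rw [ev_bind]
  rfl

theorem ultra_ext {F G : Ultrafilter X} (h : ∀ p : X → Prop, (∀ᶠ a in F, p a) → ∀ᶠ a in G, p a) :
    F = G := by
  symm
  apply Ultrafilter.eq_of_le
  intro s hs
  exact h (fun a => a ∈ s) hs

/-- Powers of an ultrafilter. -/
noncomputable def pw (F : Ultrafilter X) : (m : ℕ) → Ultrafilter (Fin m → X)
  | 0 => pure Fin.elim0
  | m + 1 => F.bind fun a => (pw F m).map (Fin.cons (α := fun _ => X) a)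

theorem ev_pw_zero {F : Ultrafilter X} {p : (Fin 0 → X) → Prop} :
    (∀ᶠ (q : Fin 0 → X) in pw F 0, p q) ↔ p Fin.elim0 := Iff.rfl

theorem ev_pw_succ {F : Ultrafilter X} {m : ℕ} {p : (Fin (m + 1) → X) → Prop} :
    (∀ᶠ (q : Fin (m + 1) → X) in pw F (m + 1), p q) ↔ ∀ᶠ a in F, ∀ᶠ (v : Fin m → X) in pw F m, p (Fin.cons a v) := by
  rw [pw, ev_bind]
  rfl

/-- Powers of an ultrafilter, on lists. -/
noncomputable def lw (F : Ultrafilter X) : (m : ℕ) → Ultrafilter (List X)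
  | 0 => pure []
  | m + 1 => F.bind fun a => (lw F m).map (List.cons a)

theorem ev_lw_zero {F : Ultrafilter X} {p : List X → Prop} :
    (∀ᶠ (q : List X) in lw F 0, p q) ↔ p [] := Iff.rfl

theorem ev_lw_succ {F : Ultrafilter X} {m : ℕ} {p : List X → Prop} :
    (∀ᶠ (q : List X) in lw F (m + 1), p q) ↔ ∀ᶠ a in F, ∀ᶠ (v : List X) in lw F m, p (a :: v) := by
  rw [lw, ev_bind]
  rfl

theorem ev_lw_one {F : Ultrafilter X} {p : List X → Prop} :
    (∀ᶠ (q : List X) in lw F 1, p q) ↔ ∀ᶠ a in F, p [a] := by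
  rw [ev_lw_succ]
  rfl

theorem ev_lw_add {F : Ultrafilter X} {m n : ℕ} {p : List X → Prop} :
    (∀ᶠ (q : List X) in lw F (m + n), p q) ↔ ∀ᶠ (l : List X) in lw F m, ∀ᶠ (l' : List X) in lw F n, p (l ++ l') := by
  induction m generalizing p with
  | zero => rw [ev_lw_zero, Nat.zero_add]; rfl
  | succ m ih =>
    rw [show m + 1 + n = (m + n) + 1 by omega, ev_lw_succ, ev_lw_succ]
    simp only [ih, List.cons_append]

theorem ev_pw_lw {F : Ultrafilter X} {m : ℕ} {p : List X → Prop} :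
    (∀ᶠ (v : Fin m → X) in pw F m, p (List.ofFn v)) ↔ ∀ᶠ (l : List X) in lw F m, p l := by
  induction m generalizing p with
  | zero => rw [ev_lw_zero, ev_pw_zero]; rfl
  | succ m ih =>
    rw [ev_lw_succ, ev_pw_succ]
    simp only [List.ofFn_cons]
    exact Filter.eventually_congr (Filter.Eventually.of_forall fun a => ih (p := fun l => p (a :: l)))

theorem ev_lw_map {F : Ultrafilter X} {f : X → Y} {m : ℕ} {p : List Y → Prop} :
    (∀ᶠ (l : List Y) in lw (F.map f) m, p l) ↔ ∀ᶠ (l : List X) in lw F m, p (l.map f) := by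
  induction m generalizing p with
  | zero => rfl
  | succ m ih =>
    rw [ev_lw_succ, ev_lw_succ, ev_map]
    simp only [ih, List.map_cons]

theorem ev_lw_flat {F : Ultrafilter X} {G : Ultrafilter Y} {f : Y → List X} {k : ℕ}
    (h : ∀ p : List X → Prop, (∀ᶠ b in G, p (f b)) ↔ ∀ᶠ (l : List X) in lw F k, p l)
    {m : ℕ} {p : List X → Prop} :
    (∀ᶠ (l : List Y) in lw G m, p (l.flatMap f)) ↔ ∀ᶠ (l : List X) in lw F (m * k), p l := by
  induction m generalizing p with
  | zero => rw [Nat.zero_mul]; rfl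
  | succ m ih =>
    rw [show (m + 1) * k = k + m * k by ring, ev_lw_succ, ev_lw_add, ← h]
    simp only [List.flatMap_cons]
    exact Filter.eventually_congr (Filter.Eventually.of_forall fun a => ih (p := fun l => p (f a ++ l)))

theorem ev_lw_all {F : Ultrafilter X} {m : ℕ} {p : X → Prop} (h : ∀ᶠ a in F, p a) :
    ∀ᶠ (l : List X) in lw F m, ∀ a ∈ l, p a := by
  induction m with
  | zero => rw [ev_lw_zero]; simp
  | succ m ih =>
    rw [ev_lw_succ]
    filter_upwards [h] with a ha
    filter_upwards [ih] with l hl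
    simpa using ⟨ha, hl⟩

theorem ev_pw_all {F : Ultrafilter X} {m : ℕ} {p : X → Prop} (h : ∀ᶠ a in F, p a) :
    ∀ᶠ (v : Fin m → X) in pw F m, ∀ i, p (v i) := by
  have := (ev_pw_lw (p := fun l => ∀ a ∈ l, p a)).2 (ev_lw_all (m := m) h)
  filter_upwards [this] with v hv i
  exact hv _ (by simp [List.mem_ofFn])

theorem ev_pw_coord {F : Ultrafilter X} {m : ℕ} {i : Fin m} {p : X → Prop} :
    (∀ᶠ (v : Fin m → X) in pw F m, p (v i)) ↔ ∀ᶠ a in F, p a := by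
  rcases F.em p with h | h
  · have := ev_pw_all (m := m) h
    refine iff_of_true ?_ h
    filter_upwards [this] with v hv using hv i
  · have := ev_pw_all (m := m) h
    refine iff_of_false ?_ ?_
    · rw [← Ultrafilter.eventually_not]
      filter_upwards [this] with v hv using hv i
    · rwa [← Ultrafilter.eventually_not]

theorem ev_lw_length {F : Ultrafilter X} {m : ℕ} : ∀ᶠ (l : List X) in lw F m, l.length = m := by
  rw [← ev_pw_lw]
  exact Filter.Eventually.of_forall fun v => List.length_ofFn

/-- Consistency along powers of an ultrafilter. -/
def Con {P O : Type*} (F : Ultrafilter P) (ρ : P → O → Prop) : Prop :=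
  ∀ m, ∀ᶠ (l : List P) in lw F m, ∃ o, ∀ a ∈ l, ρ a o

theorem con_pw {P O : Type*} {F : Ultrafilter P} {ρ : P → O → Prop} :
    Con F ρ ↔ ∀ m, ∀ᶠ (v : Fin m → P) in pw F m, ∃ o, ∀ i, ρ (v i) o := by
  refine forall_congr' fun m => ?_
  rw [← ev_pw_lw]
  simp [List.mem_ofFn]

theorem Con.mono {P O O' : Type*} {F : Ultrafilter P} {ρ : P → O → Prop} {ρ' : P → O' → Prop}
    (h : Con F ρ) (hm : ∀ o, ∃ o', ∀ a, ρ a o → ρ' a o') : Con F ρ' := by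
  intro m
  filter_upwards [h m] with l hl
  obtain ⟨o, ho⟩ := hl
  obtain ⟨o', ho'⟩ := hm o
  exact ⟨o', fun a ha => ho' a (ho a ha)⟩

theorem Con.map {P Q O : Type*} {F : Ultrafilter P} {f : P → Q} {ρ : Q → O → Prop} :
    Con (F.map f) ρ ↔ Con F (fun a => ρ (f a)) := by
  refine forall_congr' fun m => ?_
  rw [ev_lw_map]
  simp

theorem Con.regroupList {P Q O : Type*} {F : Ultrafilter P} {G : Ultrafilter Q}
    {f : Q → List P} {k : ℕ}
    (h : ∀ p : List P → Prop, (∀ᶠ b in G, p (f b)) ↔ ∀ᶠ (l : List P) in lw F k, p l)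
    {ρ : P → O → Prop} (hc : Con F ρ) : Con G (fun b o => ∀ a ∈ f b, ρ a o) := by
  intro m
  have := (ev_lw_flat h (m := m)).2 (hc (m * k))
  filter_upwards [this] with l hl
  obtain ⟨o, ho⟩ := hl
  exact ⟨o, fun b hb a ha => ho a (List.mem_flatMap.2 ⟨b, hb, ha⟩)⟩

theorem Con.regroup {P O : Type*} {F : Ultrafilter P} {ρ : P → O → Prop} (hc : Con F ρ) (k : ℕ) :
    Con (pw F k) (fun v o => ∀ i, ρ (v i) o) := by
  have := Con.regroupList (fun p => ev_pw_lw (F := F) (m := k) (p := p)) hc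
  refine this.mono fun o => ⟨o, fun v hv i => hv _ (by simp [List.mem_ofFn])⟩

theorem Con.regroup2 {P O : Type*} {F : Ultrafilter P} {ρ : P → O → Prop} (hc : Con F ρ) :
    Con (tens F F) (fun v o => ρ v.1 o ∧ ρ v.2 o) := by
  have := Con.regroupList (F := F) (G := tens F F) (f := fun v => [v.1, v.2]) (k := 2)
    (fun p => by rw [ev_lw_succ]; simp only [ev_lw_one, ev_tens]) hc
  refine this.mono fun o => ⟨o, fun v hv => by simpa using hv⟩

theorem Con.one {P O : Type*} {F : Ultrafilter P} {ρ : P → O → Prop} (hc : Con F ρ) :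
    ∀ᶠ a in F, ∃ o, ρ a o := by
  have := hc 1
  rw [ev_lw_one] at this
  simpa using this

theorem glue {A : Filter X} {B : Filter Y} {R : X → Y → Prop}
    (h : ∀ a ∈ A, ∀ b ∈ B, ∃ x ∈ a, ∃ y ∈ b, R x y) :
    ∃ K : Ultrafilter (X × Y), (K.map Prod.fst : Filter X) ≤ A ∧ (K.map Prod.snd : Filter Y) ≤ B ∧
      ∀ᶠ (q : X × Y) in K, R q.1 q.2 := by
  have hne : (A.comap Prod.fst ⊓ B.comap Prod.snd ⊓ 𝓟 {q : X × Y | R q.1 q.2}).NeBot := by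
    rw [Filter.neBot_iff]
    intro hbot
    rw [← Filter.empty_mem_iff_bot, Filter.mem_inf_principal] at hbot
    obtain ⟨s, ⟨a, ha, has⟩, t, ⟨b, hb, hbt⟩, hst⟩ := Filter.mem_inf_iff.1 hbot
    obtain ⟨x, hx, y, hy, hR⟩ := h a ha b hb
    have h1 : (x, y) ∈ s ∩ t := ⟨has hx, hbt hy⟩
    rw [← hst] at h1
    exact h1 hR
  obtain ⟨K, hK⟩ := Ultrafilter.exists_le
    (A.comap Prod.fst ⊓ B.comap Prod.snd ⊓ 𝓟 {q : X × Y | R q.1 q.2})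
  refine ⟨K, ?_, ?_, ?_⟩
  · rw [Ultrafilter.coe_map, Filter.map_le_iff_le_comap]
    exact hK.trans (inf_le_left.trans inf_le_left)
  · rw [Ultrafilter.coe_map, Filter.map_le_iff_le_comap]
    exact hK.trans (inf_le_left.trans inf_le_right)
  · exact (hK.trans inf_le_right) (Filter.mem_principal_self _)

end Ultra

section Agree

open Filter

variable (L : FirstOrder.Language.{x, y}) (N : Type w) [L.Structure N]
variable {X Y Z W : Type w} [DSpace N X] [DSpace N Y] [DSpace N Z] [DSpace N W]

/-- Two ultrafilters agree on definable sets. -/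
def Agr (F G : Ultrafilter X) : Prop :=
  ∀ p : X → Prop, DP L N p → (∀ᶠ a in F, p a) → ∀ᶠ a in G, p a

/-- The filter generated by the definable members of an ultrafilter. -/
def dfilt (F : Ultrafilter X) : Filter X where
  sets := {s | ∃ p : X → Prop, DP L N p ∧ (∀ᶠ a in F, p a) ∧ ∀ a, p a → a ∈ s}
  univ_sets := ⟨fun _ => True, DP.true', Filter.Eventually.of_forall fun _ => trivial,
    fun _ _ => trivial⟩
  sets_of_superset := by
    rintro s t ⟨p, hp, h, hs⟩ hst
    exact ⟨p, hp, h, fun a ha => hst (hs a ha)⟩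
  inter_sets := by
    rintro s t ⟨p, hp, h, hs⟩ ⟨q, hq, h', ht⟩
    exact ⟨_, hp.and hq, h.and h', fun a ha => ⟨hs a ha.1, ht a ha.2⟩⟩

variable {L N}

theorem Agr.refl (F : Ultrafilter X) : Agr L N F F := fun _ _ h => h

theorem Agr.symm {F G : Ultrafilter X} (h : Agr L N F G) : Agr L N G F := by
  intro p hp hG
  rcases F.em p with h1 | h1
  · exact h1
  · have := h _ hp.not h1
    rw [Ultrafilter.eventually_not] at this
    exact absurd hG this

theorem Agr.trans {F G H : Ultrafilter X} (h : Agr L N F G) (h' : Agr L N G H) : Agr L N F H :=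
  fun p hp hF => h' p hp (h p hp hF)

theorem Agr.map {F G : Ultrafilter X} (h : Agr L N F G) {f : X → Y} (hf : DMap N f) :
    Agr L N (F.map f) (G.map f) :=
  fun p hp hF => h (fun a => p (f a)) (hp.comp hf) hF

theorem agr_of_le {F G : Ultrafilter X} (h : (F : Filter X) ≤ dfilt L N G) : Agr L N G F :=
  fun p hp hG => h ⟨p, hp, hG, fun _ h => h⟩

/-- Fibres of definable sets are definable. -/
theorem DP.fib {p : X × Y → Prop} (h : DP L N p) (a : X) : DP L N (fun b => p (a, b)) :=
  h.comp (by fun_prop)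

theorem Agr.tens {F : Ultrafilter X} {G G' : Ultrafilter Y} (h : Agr L N G G') :
    Agr L N (tens F G) (tens F G') := by
  intro p hp hF
  rw [ev_tens] at hF ⊢
  filter_upwards [hF] with a ha
  exact h _ (hp.fib a) ha

/-- Gluing with exact second marginal. -/
theorem glueE {F : Ultrafilter X} {G : Ultrafilter Y} {R : X → Y → Prop} (hR : DP2 L N R)
    (h : ∀ θ : Y → Prop, DP L N θ → (∀ᶠ b in G, θ b) → ∀ᶠ a in F, ∃ b, θ b ∧ R a b) :
    ∃ K : Ultrafilter (Y × X), K.map Prod.fst = G ∧ Agr L N F (K.map Prod.snd) ∧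
      ∀ᶠ (q : Y × X) in K, R q.2 q.1 := by
  obtain ⟨K, h1, h2, h3⟩ := glue (A := (G : Filter Y)) (B := dfilt L N F)
    (R := fun b a => R a b) (by
      rintro s hs t ⟨p, hp, hpF, hpt⟩
      have hd : DP L N (fun b => ∃ a, p a ∧ R a b) := DP.ex (p := fun b a => p a ∧ R a b)
        ((hp.comp (by fun_prop)).and (hR.comp (by fun_prop) (by fun_prop)))
      rcases G.em (fun b => ∃ a, p a ∧ R a b) with hG | hG
      · obtain ⟨b, ⟨a, ha, hab⟩, hb⟩ := (hG.and hs).exists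
        exact ⟨b, hb, a, hpt a ha, hab⟩
      · obtain ⟨a, ⟨b, hb, hab⟩, ha⟩ := ((h _ hd.not hG).and hpF).exists
        exact absurd ⟨a, ha, hab⟩ hb)
  exact ⟨K, Ultrafilter.eq_of_le h1, agr_of_le h2, h3⟩

/-- Extension with exact marginal. -/
theorem extE {F : Ultrafilter X} {f : X → Y} (hf : DMap N f) {G : Ultrafilter Y}
    (h : Agr L N (F.map f) G) : ∃ K : Ultrafilter X, Agr L N F K ∧ K.map f = G := by
  obtain ⟨K, h1, h2, h3⟩ := glueE (L := L) (N := N) (F := F) (G := G) (R := fun a b => f a = b)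
    (DP.comp DP.eq (f := fun q : X × Y => (f q.1, q.2)) (by fun_prop)) (by
      intro θ hθ hG
      have := h.symm θ hθ hG
      rw [ev_map] at this
      filter_upwards [this] with a ha using ⟨f a, ha, rfl⟩)
  refine ⟨K.map Prod.snd, h2, ?_⟩
  rw [← h1]
  symm
  apply ultra_ext
  intro p hp
  rw [ev_map] at hp ⊢
  rw [ev_map]
  filter_upwards [hp, h3] with q hq hq3
  rwa [hq3]

end Agree


section KL

open Filter

/-- Finite SOP₁ trees of every height for the relation `ρ`. -/
def FinSOP1 {Q O : Type*} (ρ : Q → O → Prop) : Prop :=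
  ∀ s : ℕ, ∃ b : List Bool → Q,
    (∀ ν : List Bool, ν.length = s → ∃ o, ∀ η, η ≠ [] → η <+: ν → ρ (b η) o) ∧
    (∀ η₁ η₂ : List Bool, η₂.length ≤ s → (η₁ ++ [false]) <+: η₂ →
      ¬∃ o, ρ (b η₂) o ∧ ρ (b (η₁ ++ [true])) o)

/-- No definable relation has the finite SOP₁ property. -/
def NoSOP (L : FirstOrder.Language.{x, y}) (N : Type w) [L.Structure N] : Prop :=
  ∀ (Q O : Type w) [DSpace N Q] [DSpace N O] (ρ : Q → O → Prop), DP2 L N ρ → ¬ FinSOP1 ρ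

theorem prefix_cases {η₁ η₂ : List Bool} (h : (η₁ ++ [false]) <+: η₂) :
    (η₁ = [] ∧ ∃ η, η₂ = false :: η) ∨
    ∃ c η η', η₁ = c :: η ∧ η₂ = c :: η' ∧ (η ++ [false]) <+: η' := by
  rcases η₁ with _ | ⟨c, η⟩
  · left
    obtain ⟨t, rfl⟩ := h
    exact ⟨rfl, t, rfl⟩
  · right
    obtain ⟨t, rfl⟩ := h
    exact ⟨c, η, η ++ [false] ++ t, rfl, by simp, ⟨t, by simp⟩⟩

theorem prefix_take {η ν : List Bool} {s : ℕ} (hν : ν.length = s) (h : η <+: ν) :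
    ∃ i : Fin (s + 1), η = ν.take i := by
  refine ⟨⟨η.length, ?_⟩, ?_⟩
  · have := h.length_le
    omega
  · exact List.prefix_iff_eq_take.1 h

/-- Attach a root to two copies of a tree. -/
def tcons {Q T : Type w} (b : List Bool → T → Q) : List Bool → Q × (T × T) → Q
  | [], t => t.1
  | true :: η, t => b η t.2.1
  | false :: η, t => b η t.2.2

variable {L : FirstOrder.Language.{x, y}} {N : Type w} [L.Structure N]
variable {P O : Type w} [DSpace N P] [DSpace N O]

theorem klTree {U V : Ultrafilter P} (hUV : Agr L N U V) (n s : ℕ) :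
    ∃ (T : Type w) (_ : DSpace N T) (X : Ultrafilter T) (b : List Bool → T → P × (Fin n → P)),
      (∀ η, DMap N (b η)) ∧
      (∀ ν : List Bool, ν.length = s → ∀ p : (Fin (s + 1) → P × (Fin n → P)) → Prop, DP L N p →
        (∀ᶠ v in (pw (tens U (pw U n)) (s + 1) : Filter _), p v) →
          ∀ᶠ t in X, p (fun i => b (ν.take i) t)) ∧
      (∀ η : List Bool, η.length ≤ s → Agr L N (tens U (pw U n)) (X.map (b η))) ∧
      (∀ σ : P → O → Prop, DP2 L N σ →
        (∀ᶠ a in V, ∀ᶠ l in (pw U n : Filter (Fin n → P)), ¬∃ o, σ a o ∧ ∀ i, σ (l i) o) →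
        ∀ η₁ η₂ : List Bool, η₂.length ≤ s → (η₁ ++ [false]) <+: η₂ →
          ∀ᶠ t in X, ¬∃ o, (∀ i, σ ((b η₂ t).2 i) o) ∧ σ (b (η₁ ++ [true]) t).1 o) := by
  induction s with
  | zero =>
    refine ⟨P × (Fin n → P), inferInstance, tens U (pw U n), fun _ t => t, ?_, ?_, ?_, ?_⟩
    · intro η; fun_prop
    · intro ν _ p _ h
      rw [ev_pw_succ] at h
      filter_upwards [h] with t ht
      rw [ev_pw_zero] at ht
      convert ht using 1
      funext i
      fin_cases i
      rfl
    · intro η _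
      exact Agr.refl _
    · intro σ _ _ η₁ η₂ h1 h2
      have := h2.length_le
      simp at this
      omega
  | succ s ih =>
    obtain ⟨T, iT, X, b, hb, hp, hn, hi⟩ := ih
    have hX : Agr L N (X.map fun t => (b [] t).1) V := by
      have h1 : Agr L N ((tens U (pw U n)).map Prod.fst) ((X.map (b [])).map Prod.fst) :=
        (hn [] (by simp)).map (by fun_prop)
      refine Agr.trans (fun p hp h => h1.symm p hp h) (Agr.trans (G := U) ?_ hUV)
      intro p _ h
      simpa using h
    obtain ⟨X', hX', hV⟩ := extE (f := fun t => (b [] t).1) (by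
      have := hb []
      fun_prop) hX
    refine ⟨(P × (Fin n → P)) × (T × T), inferInstance,
      tens (tens U (pw U n)) (tens X' X), tcons b, ?_, ?_, ?_, ?_⟩
    · intro η
      rcases η with _ | ⟨c, η⟩
      · exact DMap.fst N (DMap.id' N)
      · have := hb η
        rcases c
        · exact DMap.comp N this (f := fun t : (P × (Fin n → P)) × (T × T) => t.2.2) (by fun_prop)
        · exact DMap.comp N this (f := fun t : (P × (Fin n → P)) × (T × T) => t.2.1) (by fun_prop)
    · intro ν hν p hpp h
      rcases ν with _ | ⟨c, ν⟩
      · simp at hν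
      have hν' : ν.length = s := by simpa using hν
      rw [ev_pw_succ] at h
      rw [ev_tens]
      filter_upwards [h] with q hq
      have hd : DP L N (fun v : Fin (s + 1) → P × (Fin n → P) =>
          p (Fin.cons (α := fun _ => P × (Fin n → P)) q v)) := by
        refine hpp.comp (f := fun v : Fin (s + 1) → P × (Fin n → P) =>
          Fin.cons (α := fun _ => P × (Fin n → P)) q v) (DMap.pi N fun i => ?_)
        refine Fin.cases ?_ (fun i => ?_) i
        · simp only [Fin.cons_zero]; fun_prop
        · simp only [Fin.cons_succ]; fun_prop
      have h2 := hp ν hν' _ hd hq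
      have h3 : DP L N (fun t => p (Fin.cons (α := fun _ => P × (Fin n → P)) q
          fun i => b (ν.take i) t)) := by
        refine hd.comp (f := fun t => fun i : Fin (s + 1) => b (ν.take i) t) (DMap.pi N fun i => hb _)
      rw [ev_tens]
      have key : ∀ t : T × T, (fun i : Fin (s + 1 + 1) => tcons b ((c :: ν).take i) (q, t)) =
          Fin.cons (α := fun _ => P × (Fin n → P)) q
            fun i => b (ν.take i) (if c then t.1 else t.2) := by
        intro t
        funext i
        refine Fin.cases rfl (fun i => ?_) i
        rcases c <;> simp [tcons]
      simp only [key]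
      rcases c
      · exact Filter.Eventually.of_forall fun _ => h2
      · have h4 := hX' _ h3 h2
        filter_upwards [h4] with t ht
        exact Filter.Eventually.of_forall fun _ => ht
    · intro η hη
      rcases η with _ | ⟨c, η⟩
      · intro p hp h
        rw [ev_map, ev_tens]
        filter_upwards [h] with q hq
        exact Filter.Eventually.of_forall fun _ => hq
      · have h1 := hn η (by simpa using hη)
        have h2 := h1.trans (hX'.map (hb η))
        intro p hp h
        rw [ev_map, ev_tens]
        refine Filter.Eventually.of_forall fun q => ?_
        rw [ev_tens]
        rcases c
        · exact Filter.Eventually.of_forall fun _ => h1 p hp h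
        · filter_upwards [h2 p hp h] with t ht
          exact Filter.Eventually.of_forall fun _ => ht
    · intro σ hσ hinc η₁ η₂ hl hpre
      rw [ev_tens]
      refine Filter.Eventually.of_forall fun q => ?_
      rw [ev_tens]
      rcases prefix_cases hpre with ⟨rfl, η, rfl⟩ | ⟨c, η, η', rfl, rfl, hpre'⟩
      · rw [← hV, ev_map] at hinc
        filter_upwards [hinc] with t ht
        have h1 := hn η (by simpa using hl)
        have hd : DP L N (fun q : P × (Fin n → P) =>
            ¬∃ o, (∀ i, σ (q.2 i) o) ∧ σ (b [] t).1 o) := by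
          refine DP.not (DP.ex (p := fun (q : P × (Fin n → P)) o =>
            (∀ i, σ (q.2 i) o) ∧ σ (b [] t).1 o) (DP.and (DP.forallFin fun i => ?_) ?_))
          · exact hσ.comp (by fun_prop) (by fun_prop)
          · exact hσ.comp (by fun_prop) (by fun_prop)
        have h2 := h1 _ hd (by
          rw [ev_tens]
          refine Filter.Eventually.of_forall fun _ => ?_
          filter_upwards [ht] with l hl
          rintro ⟨o, h1, h2⟩
          exact hl ⟨o, h2, h1⟩)
        filter_upwards [h2] with t' ht'
        exact ht'
      · have h1 := hi σ hσ hinc η η' (by simpa using hl) hpre'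
        rcases c
        · exact Filter.Eventually.of_forall fun _ => h1
        · have hd : DP L N (fun t => ¬∃ o, (∀ i, σ ((b η' t).2 i) o) ∧
              σ (b (η ++ [true]) t).1 o) := by
            have e1 := hb η'
            have e2 := hb (η ++ [true])
            refine DP.not (DP.ex (p := fun t o => (∀ i, σ ((b η' t).2 i) o) ∧
              σ (b (η ++ [true]) t).1 o) (DP.and (DP.forallFin fun i => ?_) ?_))
            · exact hσ.comp (by fun_prop) (by fun_prop)
            · exact hσ.comp (by fun_prop) (by fun_prop)
          have h2 := hX' _ hd h1
          filter_upwards [h2] with t ht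
          exact Filter.Eventually.of_forall fun _ => ht

/-- Kim's lemma. -/
theorem kimLemma (hN : NoSOP L N) {U V : Ultrafilter P} (hUV : Agr L N U V)
    {ρ : P → O → Prop} (hρ : DP2 L N ρ) (hU : Con U ρ) : Con V ρ := by
  by_contra hV
  let S : ℕ → Prop := fun j => ∀ n, ∀ᶠ a in (lw V j : Filter (List P)),
    ∀ᶠ l in (lw U n : Filter (List P)), ∃ o, ∀ c ∈ a ++ l, ρ c o
  have h0 : S 0 := by
    intro n
    rw [ev_lw_zero]
    simpa using hU n
  have hex : ∃ j, ¬ S j := by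
    by_contra hcon
    push Not at hcon
    apply hV
    intro m
    have := hcon m 0
    simpa [ev_lw_zero] using this
  obtain ⟨j, hSj, hSj1⟩ : ∃ j, S j ∧ ¬ S (j + 1) := by
    by_contra hcon
    push Not at hcon
    obtain ⟨j, hj⟩ := hex
    apply hj
    clear hj
    induction j with
    | zero => exact h0
    | succ j ih => exact hcon j ih
  simp only [S, not_forall] at hSj1
  obtain ⟨n, hn⟩ := hSj1
  rw [ev_lw_add] at hn
  simp only [ev_lw_one, ← Ultrafilter.eventually_not] at hn
  let ψ : (P × (Fin n → P)) × (Fin j → P) → O → Prop := fun q o =>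
    (ρ q.1.1 o ∧ ∀ i, ρ (q.1.2 i) o) ∧ ∀ i, ρ (q.2 i) o
  have hψ : DP2 L N ψ := by
    refine DP.and (DP.and ?_ (DP.forallFin fun i => ?_)) (DP.forallFin fun i => ?_)
    all_goals exact hρ.comp (by fun_prop) (by fun_prop)
  refine hN _ _ ψ hψ ?_
  intro s
  obtain ⟨T, iT, X, b, hb, hp, hm, hi⟩ := klTree (O := O) hUV n s
  have e1 := hSj ((s + 1) * (1 + n))
  have e3 := e1.and hn
  rw [← ev_pw_lw] at e3
  obtain ⟨a, ha1, ha2⟩ := e3.exists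
  let σ : P → O → Prop := fun c o => ρ c o ∧ ∀ i, ρ (a i) o
  have hσ : DP2 L N σ := by
    refine DP.and ?_ (DP.forallFin fun i => ?_)
    all_goals exact hρ.comp (by fun_prop) (by fun_prop)
  have hinc : ∀ᶠ c in V, ∀ᶠ l in (pw U n : Filter (Fin n → P)), ¬∃ o, σ c o ∧ ∀ i, σ (l i) o := by
    filter_upwards [ha2] with c hc
    rw [← ev_pw_lw] at hc
    filter_upwards [hc] with l hl
    rintro ⟨o, h1, h2⟩
    refine hl ⟨o, fun d hd => ?_⟩
    simp only [List.append_assoc, List.mem_append, List.mem_ofFn, List.mem_singleton] at hd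
    rcases hd with ⟨i, rfl⟩ | rfl | ⟨i, rfl⟩
    · exact h1.2 i
    · exact h1.1
    · exact (h2 i).1
  have hpath : ∀ ν : List Bool, ν.length = s → ∀ᶠ t in X, ∃ o, ∀ i : Fin (s + 1),
      σ (b (ν.take i) t).1 o ∧ ∀ k, σ ((b (ν.take i) t).2 k) o := by
    intro ν hν
    refine hp ν hν (fun v => ∃ o, ∀ i, σ (v i).1 o ∧ ∀ k, σ ((v i).2 k) o) ?_ ?_
    · refine DP.ex (p := fun (v : Fin (s + 1) → P × (Fin n → P)) o =>
        ∀ i, σ (v i).1 o ∧ ∀ k, σ ((v i).2 k) o) (DP.forallFin fun i =>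
        DP.and ?_ (DP.forallFin fun k => ?_))
      · exact hσ.comp (by fun_prop) (by fun_prop)
      · exact hσ.comp (by fun_prop) (by fun_prop)
    · have hfl := ev_lw_flat (F := U) (G := tens U (pw U n)) (k := 1 + n)
        (f := fun q => q.1 :: List.ofFn q.2) (m := s + 1)
        (p := fun l => ∃ o, ∀ c ∈ List.ofFn a ++ l, ρ c o) (by
          intro p
          rw [ev_tens, ev_lw_add, ev_lw_one]
          refine Filter.eventually_congr (Filter.Eventually.of_forall fun c => ?_)
          exact ev_pw_lw (p := fun l => p (c :: l)))
      have := hfl.2 ha1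
      rw [← ev_pw_lw] at this
      filter_upwards [this] with v hv
      obtain ⟨o, ho⟩ := hv
      have hA : ∀ i, ρ (a i) o := fun i => ho _ (List.mem_append_left _ (List.mem_ofFn.2 ⟨i, rfl⟩))
      refine ⟨o, fun i => ⟨⟨ho _ ?_, hA⟩, fun k => ⟨ho _ ?_, hA⟩⟩⟩
      · refine List.mem_append_right _ (List.mem_flatMap.2 ⟨v i, List.mem_ofFn.2 ⟨i, rfl⟩, by simp⟩)
      · refine List.mem_append_right _ (List.mem_flatMap.2
          ⟨v i, List.mem_ofFn.2 ⟨i, rfl⟩, List.mem_cons_of_mem _ (List.mem_ofFn.2 ⟨k, rfl⟩)⟩)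
  have hfin1 : ∀ᶠ t in X, ∀ ν ∈ {ν : List Bool | ν.length = s}, ∃ o, ∀ i : Fin (s + 1),
      σ (b (ν.take i) t).1 o ∧ ∀ k, σ ((b (ν.take i) t).2 k) o :=
    (Filter.eventually_all_finite (List.finite_length_eq Bool s)).2 hpath
  have hfin2 : ∀ᶠ t in X, ∀ q ∈ {q : List Bool × List Bool | q.1 ∈ {l : List Bool | l.length ≤ s} ∧
      q.2 ∈ {l : List Bool | l.length ≤ s}}, (q.1 ++ [false]) <+: q.2 →
      ¬∃ o, (∀ i, σ ((b q.2 t).2 i) o) ∧ σ (b (q.1 ++ [true]) t).1 o := by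
    refine (Filter.eventually_all_finite ?_).2 ?_
    · exact (List.finite_length_le Bool s).prod (List.finite_length_le Bool s)
    · rintro ⟨η₁, η₂⟩ ⟨_, h2⟩
      by_cases hpre : (η₁ ++ [false]) <+: η₂
      · filter_upwards [hi σ hσ hinc η₁ η₂ h2 hpre] with t ht _ using ht
      · exact Filter.Eventually.of_forall fun t ht => absurd ht hpre
  obtain ⟨t, ht1, ht2⟩ := (hfin1.and hfin2).exists
  refine ⟨fun η => (b η t, a), ?_, ?_⟩
  · intro ν hν
    obtain ⟨o, ho⟩ := ht1 ν hν
    refine ⟨o, fun η _ hη => ?_⟩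
    obtain ⟨i, rfl⟩ := prefix_take hν hη
    have := ho i
    exact ⟨⟨this.1.1, fun k => (this.2 k).1⟩, this.1.2⟩
  · rintro η₁ η₂ hl hpre ⟨o, h1, h2⟩
    have hlen := hpre.length_le
    simp only [List.length_append, List.length_singleton] at hlen
    refine ht2 (η₁, η₂) ⟨?_, hl⟩ hpre ⟨o, fun i => ⟨h1.1.2 i, h1.2⟩, h2.1.1, h2.2⟩
    simp only [Set.mem_setOf_eq]
    omega

end KL


section Sym

open Filter

variable {L : FirstOrder.Language.{x, y}} {N : Type w} [L.Structure N]

/-- Nodes of one half of the next tree. -/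
def gnode {Y T : Type w} (y : List Bool → T → Y) : List Bool → Y × T → Y
  | [], q => q.1
  | c :: η, q => y (c :: η) q.2

/-- Nodes of the next tree. -/
def gcons {Y T : Type w} (y : List Bool → T → Y) : List Bool → T × T → Y
  | [], q => y [] q.1
  | true :: η, q => y η q.1
  | false :: η, q => y η q.2

theorem gcons_dmap {Y T : Type w} [DSpace N Y] [DSpace N T] {y : List Bool → T → Y}
    (h : ∀ η, DMap N (y η)) (η : List Bool) : DMap N (gcons y η) := by
  rcases η with _ | ⟨_ | _, η⟩
  · exact DMap.comp N (h []) (f := fun t : T × T => t.1) (by fun_prop)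
  · exact DMap.comp N (h η) (f := fun t : T × T => t.2) (by fun_prop)
  · exact DMap.comp N (h η) (f := fun t : T × T => t.1) (by fun_prop)

theorem gnode_dmap {Y T : Type w} [DSpace N Y] [DSpace N T] {y : List Bool → T → Y}
    (h : ∀ η, DMap N (y η)) (η : List Bool) : DMap N (gnode y η) := by
  rcases η with _ | ⟨c, η⟩
  · exact DMap.fst N (DMap.id' N)
  · exact DMap.comp N (h (c :: η)) (f := fun t : Y × T => t.2) (by fun_prop)

variable {X Y : Type w} [DSpace N X] [DSpace N Y]

theorem symTree (hN : NoSOP L N) {F : Ultrafilter X} {G : Ultrafilter Y} {ρ : X → Y → Prop}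
    (hρ : DP2 L N ρ)
    (H : ∀ θ : Y → Prop, DP L N θ → (∀ᶠ b in G, θ b) → Con F (fun a b => ρ a b ∧ θ b))
    (hinc : ∀ᶠ b in G, ∀ᶠ b' in G, ¬∃ a, ρ a b ∧ ρ a b') (s : ℕ) :
    ∃ (T : Type w) (_ : DSpace N T) (Z : Ultrafilter T) (x : List Bool → T → X)
      (y : List Bool → T → Y),
      (∀ ν, DMap N (x ν)) ∧ (∀ η, DMap N (y η)) ∧
      (∀ θ : Y → Prop, DP L N θ → (∀ᶠ b in G, θ b) →
        Con Z (fun t b => (∀ ν : {ν : List Bool // ν.length = s}, ρ (x ν t) b) ∧ θ b)) ∧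
      (∀ η, η ≠ [] → η.length ≤ s → Agr L N (Z.map (y η)) G) ∧
      (∀ ν : List Bool, ν.length = s → ∀ η, η ≠ [] → η <+: ν → ∀ᶠ t in Z, ρ (x ν t) (y η t)) ∧
      (∀ η₁ η₂ : List Bool, η₂.length ≤ s → (η₁ ++ [false]) <+: η₂ →
        ∀ᶠ t in Z, ¬∃ a, ρ a (y η₂ t) ∧ ρ a (y (η₁ ++ [true]) t)) := by
  induction s with
  | zero =>
    obtain ⟨b0, -⟩ := hinc.exists
    refine ⟨X, inferInstance, F, fun _ t => t, fun _ _ => b0, ?_, ?_, ?_, ?_, ?_, ?_⟩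
    · intro ν; fun_prop
    · intro ν; fun_prop
    · intro θ h1 h2
      exact (H θ h1 h2).mono fun o => ⟨o, fun a ha => ⟨fun _ => ha.1, ha.2⟩⟩
    · intro η h1 h2
      exact absurd (List.length_eq_zero_iff.1 (Nat.le_zero.1 h2)) h1
    · intro ν hν η h1 h2
      have := h2.length_le
      exact absurd (List.length_eq_zero_iff.1 (by omega)) h1
    · intro η₁ η₂ h1 h2
      have := h2.length_le
      simp at this
      omega
  | succ s ih =>
    obtain ⟨T, iT, Z, x, y, hx, hy, he, hn, hp, hi⟩ := ih
    have hRs : DP2 L N (fun (t : T) (b : Y) => ∀ ν : {ν : List Bool // ν.length = s}, ρ (x ν t) b) := by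
      have : Finite {ν : List Bool // ν.length = s} := List.finite_length_eq Bool s
      refine DP.forallFin fun ν => ?_
      have := hx ν
      exact hρ.comp (f := fun q : T × Y => x ν q.1) (g := fun q => q.2) (by fun_prop) (by fun_prop)
    obtain ⟨K, hK1, hK2, hK3⟩ := glueE hRs (F := Z) (G := G) (by
      intro θ h1 h2
      filter_upwards [(he θ h1 h2).one] with t ht
      obtain ⟨o, ho⟩ := ht
      exact ⟨o, ho.2, ho.1⟩)
    have hK1' : ∀ p : Y → Prop, (∀ᶠ b in G, p b) ↔ ∀ᶠ (q : Y × T) in K, p q.1 := by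
      intro p
      rw [← hK1]
      rfl
    have hg : ∀ η : List Bool, η.length ≤ s → Agr L N (K.map (gnode y η)) G := by
      intro η h
      rcases η with _ | ⟨c, η⟩
      · intro p _ h
        exact (hK1' p).2 h
      · refine Agr.trans ?_ (hn (c :: η) (by simp) h)
        exact (hK2.symm).map (hy (c :: η))
    refine ⟨(Y × T) × (Y × T), inferInstance, tens K K, gcons fun ν q => x ν q.2,
      gcons (gnode y), ?_, ?_, ?_, ?_, ?_, ?_⟩
    · refine gcons_dmap fun ν => ?_
      have := hx ν
      fun_prop
    · exact gcons_dmap (gnode_dmap hy)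
    · intro θ h1 h2
      have h3 := kimLemma hN hK2 (ρ := fun (t : T) (b : Y) =>
        (∀ ν : {ν : List Bool // ν.length = s}, ρ (x ν t) b) ∧ θ b)
        (hRs.and (h1.comp (f := fun q : T × Y => q.2) (by fun_prop))) (he θ h1 h2)
      rw [Con.map] at h3
      refine h3.regroup2.mono fun o => ⟨o, fun a ha => ⟨?_, ha.1.2⟩⟩
      rintro ⟨_ | ⟨_ | _, ν⟩, hν⟩
      · simp at hν
      · exact ha.2.1 ⟨ν, by simpa using hν⟩
      · exact ha.1.1 ⟨ν, by simpa using hν⟩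
    · rintro (_ | ⟨c, η⟩) h1 h2
      · exact absurd rfl h1
      · have := hg η (by simpa using h2)
        intro p hp h
        rw [ev_map, ev_tens] at h
        refine this p hp ?_
        rw [ev_map]
        rcases c
        · obtain ⟨q, hq⟩ := h.exists
          exact hq
        · filter_upwards [h] with q hq
          obtain ⟨q', hq'⟩ := hq.exists
          exact hq'
    · rintro (_ | ⟨c, ν⟩) hν (_ | ⟨c', η⟩) h1 h2
      · simp at hν
      · simp at hν
      · exact absurd rfl h1
      · obtain ⟨rfl, h2'⟩ := List.cons_prefix_cons.1 h2
        have hν' : ν.length = s := by simpa using hν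
        have key : ∀ᶠ (q : Y × T) in K, ρ (x ν q.2) (gnode y η q) := by
          rcases η with _ | ⟨c, η⟩
          · filter_upwards [hK3] with q hq
            exact hq ⟨ν, hν'⟩
          · have := hp ν hν' (c :: η) (by simp) h2'
            refine hK2 _ (hρ.comp ?_ ?_) this
            · exact hx ν
            · exact hy _
        rw [ev_tens]
        rcases c'
        · exact Filter.Eventually.of_forall fun _ => key
        · filter_upwards [key] with q hq
          exact Filter.Eventually.of_forall fun _ => hq
    · intro η₁ η₂ h1 h2
      rw [ev_tens]
      rcases prefix_cases h2 with ⟨rfl, η, rfl⟩ | ⟨c, η, η', rfl, rfl, h3⟩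
      · have h4 := (hK1' _).1 hinc
        filter_upwards [h4] with q hq
        have h5 := (hg η (by simpa using h1)).symm _ ?_ hq
        · filter_upwards [h5] with q' hq'
          rintro ⟨a, ha, ha'⟩
          exact hq' ⟨a, ha', ha⟩
        · refine (DP.ex ?_).not
          exact (hρ.comp (f := fun r : Y × X => r.2) (g := fun _ => q.1) (by fun_prop)
            (by fun_prop)).and (hρ.comp (by fun_prop) (by fun_prop))
      · have key : ∀ᶠ (q : Y × T) in K,
            ¬∃ a, ρ a (gnode y η' q) ∧ ρ a (gnode y (η ++ [true]) q) := by
          have h1' : η'.length ≤ s := by simpa using h1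
          obtain ⟨d, η'', rfl⟩ : ∃ d η'', η' = d :: η'' := by
            rcases η' with _ | ⟨d, η''⟩
            · simp at h3
            · exact ⟨_, _, rfl⟩
          have h5 := hi η (d :: η'') h1' h3
          have h6 := hK2 (fun t => ¬∃ a, ρ a (y (d :: η'') t) ∧ ρ a (y (η ++ [true]) t)) ?_ h5
          · have h7 : ∀ q : Y × T, gnode y (η ++ [true]) q = y (η ++ [true]) q.2 := by
              intro q
              rcases η <;> rfl
            filter_upwards [h6] with q hq
            rw [h7]
            exact hq
          · refine (DP.ex ?_).not
            have e1 := hy (d :: η'')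
            have e2 := hy (η ++ [true])
            exact (hρ.comp (f := fun r : T × X => r.2) (g := fun r => y (d :: η'') r.1)
              (by fun_prop) (by fun_prop)).and
              (hρ.comp (f := fun r : T × X => r.2) (by fun_prop) (by fun_prop))
        rcases c
        · exact Filter.Eventually.of_forall fun _ => key
        · filter_upwards [key] with q hq
          exact Filter.Eventually.of_forall fun _ => hq

theorem sym2 (hN : NoSOP L N) {F : Ultrafilter X} {G : Ultrafilter Y} {ρ : X → Y → Prop}
    (hρ : DP2 L N ρ)
    (H : ∀ θ : Y → Prop, DP L N θ → (∀ᶠ b in G, θ b) → Con F (fun a b => ρ a b ∧ θ b))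
    (hinc : ∀ᶠ b in G, ∀ᶠ b' in G, ¬∃ a, ρ a b ∧ ρ a b') : False := by
  refine hN Y X (fun b a => ρ a b) (hρ.comp (f := fun q : Y × X => q.2) (g := fun q => q.1)
    (by fun_prop) (by fun_prop)) fun s => ?_
  obtain ⟨T, iT, Z, x, y, hx, hy, he, hn, hp, hi⟩ := symTree hN hρ H hinc s
  have h1 : ∀ᶠ t in Z, ∀ q ∈ {q : List Bool × List Bool | q.1 ∈ {l : List Bool | l.length ≤ s} ∧
      q.2 ∈ {l : List Bool | l.length ≤ s}}, q.1.length = s → q.2 ≠ [] → q.2 <+: q.1 →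
      ρ (x q.1 t) (y q.2 t) := by
    refine (Filter.eventually_all_finite ?_).2 ?_
    · exact (List.finite_length_le Bool s).prod (List.finite_length_le Bool s)
    · rintro ⟨ν, η⟩ -
      by_cases h : ν.length = s ∧ η ≠ [] ∧ η <+: ν
      · filter_upwards [hp ν h.1 η h.2.1 h.2.2] with t ht _ _ _ using ht
      · exact Filter.Eventually.of_forall fun t h1 h2 h3 => absurd ⟨h1, h2, h3⟩ h
  have h2 : ∀ᶠ t in Z, ∀ q ∈ {q : List Bool × List Bool | q.1 ∈ {l : List Bool | l.length ≤ s} ∧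
      q.2 ∈ {l : List Bool | l.length ≤ s}}, (q.1 ++ [false]) <+: q.2 →
      ¬∃ a, ρ a (y q.2 t) ∧ ρ a (y (q.1 ++ [true]) t) := by
    refine (Filter.eventually_all_finite ?_).2 ?_
    · exact (List.finite_length_le Bool s).prod (List.finite_length_le Bool s)
    · rintro ⟨η₁, η₂⟩ ⟨_, h2⟩
      by_cases hpre : (η₁ ++ [false]) <+: η₂
      · filter_upwards [hi η₁ η₂ h2 hpre] with t ht _ using ht
      · exact Filter.Eventually.of_forall fun t ht => absurd ht hpre
  obtain ⟨t, ht1, ht2⟩ := (h1.and h2).exists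
  refine ⟨fun η => y η t, ?_, ?_⟩
  · intro ν hν
    refine ⟨x ν t, fun η h3 h4 => ht1 (ν, η) ⟨hν.le, ?_⟩ hν h3 h4⟩
    exact h4.length_le.trans hν.le
  · intro η₁ η₂ h3 h4
    refine ht2 (η₁, η₂) ⟨?_, h3⟩ h4
    have := h4.length_le
    simp at this
    show η₁.length ≤ s
    omega

theorem Con.and_left {P O : Type*} {F : Ultrafilter P} {ρ : P → O → Prop} (hc : Con F ρ)
    {θ : P → Prop} (h : ∀ᶠ a in F, θ a) : Con F (fun a o => ρ a o ∧ θ a) := by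
  intro m
  filter_upwards [hc m, ev_lw_all (m := m) h] with l h1 h2
  obtain ⟨o, ho⟩ := h1
  exact ⟨o, fun a ha => ⟨ho a ha, h2 a ha⟩⟩

theorem conSym (hN : NoSOP L N) {F : Ultrafilter X} {G : Ultrafilter Y} {ρ : X → Y → Prop}
    (hρ : DP2 L N ρ)
    (H : ∀ θ : Y → Prop, DP L N θ → (∀ᶠ b in G, θ b) → Con F (fun a b => ρ a b ∧ θ b))
    (θ : X → Prop) (hθ : DP L N θ) (hθF : ∀ᶠ a in F, θ a) :
    Con G (fun b a => ρ a b ∧ θ a) := by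
  classical
  rw [con_pw]
  by_contra hcon
  let Bad : ℕ → Prop := fun k => ∃ (T : Type w) (_ : DSpace N T) (Z : Ultrafilter T)
    (σ : T → Y → Prop), DP2 L N σ ∧
      (∀ θ : Y → Prop, DP L N θ → (∀ᶠ b in G, θ b) → Con Z (fun t b => σ t b ∧ θ b)) ∧
      ¬ ∀ᶠ v in (pw G k : Filter (Fin k → Y)), ∃ t, ∀ j, σ t (v j)
  have hbad : ∃ k, Bad k := by
    rw [not_forall] at hcon
    obtain ⟨m, hm⟩ := hcon
    refine ⟨m, X, inferInstance, F, fun a b => ρ a b ∧ θ a,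
      hρ.and (hθ.comp (f := fun q : X × Y => q.1) (by fun_prop)), ?_, ?_⟩
    · intro θ' h1 h2
      exact ((H θ' h1 h2).and_left hθF).mono fun o => ⟨o, fun a ha => ⟨⟨ha.1.1, ha.2⟩, ha.1.2⟩⟩
    · simpa using hm
  obtain ⟨T, iT, Z, σ, hσ, hZ, hk⟩ := Nat.find_spec hbad
  have hmin : ∀ k, k < Nat.find hbad → ¬ Bad k := fun k hk => Nat.find_min hbad hk
  generalize Nat.find hbad = k at hk hmin
  rcases k with _ | k
  · apply hk
    rw [ev_pw_zero]
    obtain ⟨t, -⟩ := (Filter.Eventually.of_forall (f := (Z : Filter T)) (p := fun _ => True)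
      fun _ => trivial).exists
    exact ⟨t, fun j => j.elim0⟩
  rcases k with _ | k
  · have h1 : ∀ᶠ b in G, ¬∃ t, σ t b := by
      rw [Ultrafilter.eventually_not]
      intro h
      apply hk
      rw [ev_pw_succ]
      filter_upwards [h] with b hb
      rw [ev_pw_zero]
      obtain ⟨t, ht⟩ := hb
      refine ⟨t, fun j => ?_⟩
      fin_cases j
      exact ht
    have h2 := (hZ _ (DP.ex (p := fun b t => σ t b) (hσ.comp (f := fun q : Y × T => q.2)
      (g := fun q => q.1) (by fun_prop) (by fun_prop))).not h1).one
    obtain ⟨t, b, hb, hb'⟩ := h2.exists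
    exact hb' ⟨t, hb⟩
  · have hσs : DP2 L N (fun (t : T) (v : Fin (k + 1) → Y) => ∀ j, σ t (v j)) := by
      refine DP.forallFin fun j => ?_
      exact hσ.comp (f := fun q : T × (Fin (k + 1) → Y) => q.1) (g := fun q => q.2 j)
        (by fun_prop) (DMap.apply N (f := fun q : T × (Fin (k + 1) → Y) => q.2) (by fun_prop) j)
    refine sym2 hN (F := Z) (G := pw G (k + 1)) hσs ?_ ?_
    · intro θs h1 h2
      rw [con_pw]
      by_contra hcon2
      rw [not_forall] at hcon2
      obtain ⟨l, hl⟩ := hcon2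
      rcases l with _ | l
      · apply hl
        rw [ev_pw_zero]
        obtain ⟨v, -⟩ := h2.exists
        exact ⟨v, fun i => i.elim0⟩
      rw [← Ultrafilter.eventually_not] at hl
      refine hmin (k + 1) (by omega) ⟨Fin (l + 1) → T, inferInstance, pw Z (l + 1),
        fun w b => (∀ i, σ (w i) b) ∧
          ¬∃ v : Fin (k + 1) → Y, ∀ i, (∀ j, σ (w i) (v j)) ∧ θs v, ?_, ?_, ?_⟩
      · refine DP.and (DP.forallFin fun i => ?_) (DP.not ?_)
        · exact hσ.comp (f := fun q : (Fin (l + 1) → T) × Y => q.1 i) (g := fun q => q.2)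
            (DMap.apply N (f := fun q : (Fin (l + 1) → T) × Y => q.1) (by fun_prop) i) (by fun_prop)
        · refine DP.ex (DP.forallFin fun i => DP.and (DP.forallFin fun j => ?_) ?_)
          · exact hσ.comp
              (DMap.apply N (f := fun q : ((Fin (l + 1) → T) × Y) × (Fin (k + 1) → Y) => q.1.1)
                (by fun_prop) i)
              (DMap.apply N (f := fun q : ((Fin (l + 1) → T) × Y) × (Fin (k + 1) → Y) => q.2)
                (by fun_prop) j)
          · exact h1.comp (by fun_prop)
      · intro θ' h3 h4
        refine (((hZ θ' h3 h4).regroup (l + 1)).and_left hl).mono fun o => ⟨o, fun a ha => ?_⟩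
        exact ⟨⟨fun i => (ha.1 i).1, ha.2⟩, (ha.1 0).2⟩
      · intro hev
        obtain ⟨v, hv, hv'⟩ := (hev.and h2).exists
        obtain ⟨w, hw⟩ := hv
        exact (hw 0).2 ⟨v, fun i => ⟨fun j => (hw j).1 i, hv'⟩⟩
    · rw [← Ultrafilter.eventually_not, ev_pw_succ] at hk
      have := (ev_pw_coord (F := G) (m := k + 1) (i := 0)).2 hk
      filter_upwards [this] with v hv
      filter_upwards [hv] with v' hv'
      rintro ⟨t, h1, h2⟩
      refine hv' ⟨t, fun j => ?_⟩
      refine Fin.cases ?_ (fun i => ?_) j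
      · simpa using h1 0
      · simpa using h2 i

end Sym


section Amalg

open Filter

variable {L : FirstOrder.Language.{x, y}} {N : Type w} [L.Structure N]
variable {X C D : Type w} [DSpace N X] [DSpace N C] [DSpace N D]

/-- First coordinate of the nodes. -/
def dnode {C D T : Type w} (d : List Bool → T → D) : List Bool → (D × T) × C → D
  | [], h => h.1.1
  | e :: η, h => d (e :: η) h.1.2

/-- Second coordinate of the nodes. -/
def cnode {C D T : Type w} (c : List Bool → T → C) : List Bool → (D × T) × C → C
  | [], h => h.2
  | e :: η, h => c (e :: η) h.1.2

theorem amalgTree {Γ : Ultrafilter C} {G : Ultrafilter D} {P : Ultrafilter X}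
    {α : X → D → Prop} {β : X → C → Prop} {r : C → D → Prop}
    (hβ : DP2 L N β)
    (h1 : ∀ᶠ a in P, ∀ᶠ c in Γ, β a c) (h2 : ∀ᶠ d in G, ∀ᶠ a in P, α a d)
    (h3 : ∀ θ : C → Prop, DP L N θ → (∀ᶠ c in Γ, θ c) → Con G (fun d c => r c d ∧ θ c))
    (hno : ∀ a c d, α a d → β a c → r c d → False) (s : ℕ) :
    ∃ (T : Type w) (Z : Ultrafilter T) (x : List Bool → T → X)
      (d : List Bool → T → D) (c : List Bool → T → C) (δ : T → List D) (k : ℕ),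
      (∀ ν : List Bool, ν.length = s → ∀ p : X → Prop, (∀ᶠ a in P, p a) → ∀ᶠ t in Z, p (x ν t)) ∧
      (∀ p : List D → Prop, (∀ᶠ t in Z, p (δ t)) ↔ ∀ᶠ l in (lw G k : Filter (List D)), p l) ∧
      (∀ η, η ≠ [] → η.length ≤ s → ∀ t, d η t ∈ δ t) ∧
      (∀ ν : List Bool, ν.length = s → ∀ η, η ≠ [] → η <+: ν →
        ∀ᶠ t in Z, α (x ν t) (d η t) ∧ β (x ν t) (c η t)) ∧
      (∀ η₁ η₂ : List Bool, η₂.length ≤ s → (η₁ ++ [false]) <+: η₂ →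
        ∀ᶠ t in Z, ¬∃ a, (α a (d η₂ t) ∧ β a (c η₂ t)) ∧
          (α a (d (η₁ ++ [true]) t) ∧ β a (c (η₁ ++ [true]) t))) := by
  induction s with
  | zero =>
    obtain ⟨a0, ha0⟩ := h1.exists
    obtain ⟨c0, -⟩ := ha0.exists
    obtain ⟨d0, -⟩ := h2.exists
    refine ⟨X, P, fun _ t => t, fun _ _ => d0, fun _ _ => c0, fun _ => [], 0, ?_, ?_, ?_, ?_, ?_⟩
    · intro ν _ p h
      exact h
    · intro p
      rw [ev_lw_zero]
      simp
    · intro η h1 h2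
      exact absurd (List.length_eq_zero_iff.1 (Nat.le_zero.1 h2)) h1
    · intro ν hν η h1 h2
      have := h2.length_le
      exact absurd (List.length_eq_zero_iff.1 (by omega)) h1
    · intro η₁ η₂ h1 h2
      have := h2.length_le
      simp at this
      omega
  | succ s ih =>
    obtain ⟨T, Z, x, d, c, δ, k, hm, hδ, hdn, hp, hi⟩ := ih
    have hδ1 : ∀ p : List D → Prop, (∀ᶠ (q : D × T) in tens G Z, p (q.1 :: δ q.2)) ↔
        ∀ᶠ l in (lw G (k + 1) : Filter (List D)), p l := by
      intro p
      rw [ev_tens, ev_lw_succ]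
      refine Filter.eventually_congr (Filter.Eventually.of_forall fun b => ?_)
      exact hδ (fun l => p (b :: l))
    obtain ⟨K, hK1, hK2, hK3⟩ := glue (A := dfilt L N Γ)
      (B := (tens (tens G Z) Γ : Filter ((D × T) × C)))
      (R := fun c1 h => ∀ e ∈ h.1.1 :: δ h.1.2, r c1 e) (by
        rintro S ⟨θ, hθ, hθΓ, hθS⟩ b hb
        have e1 := (hδ1 (fun l => ∃ c, ∀ e ∈ l, r c e ∧ θ c)).2 (h3 θ hθ hθΓ (k + 1))
        have e2 : ∀ᶠ (h : (D × T) × C) in tens (tens G Z) Γ, h ∈ b := hb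
        rw [ev_tens] at e2
        obtain ⟨q, ⟨c1, hc1⟩, hq⟩ := (e1.and e2).exists
        obtain ⟨c0, hc0⟩ := hq.exists
        exact ⟨c1, hθS _ (hc1 q.1 (by simp)).2, (q, c0), hc0, fun e he => (hc1 e he).1⟩)
    have hK1' : ∀ p : C → Prop, DP L N p → (∀ᶠ c in Γ, p c) →
        ∀ᶠ (q : C × ((D × T) × C)) in K, p q.1 := fun p hp h => agr_of_le hK1 p hp h
    have hK2' : ∀ p : (D × T) × C → Prop, (∀ᶠ (h : (D × T) × C) in tens (tens G Z) Γ, p h) →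
        ∀ᶠ (q : C × ((D × T) × C)) in K, p q.2 := fun p h => hK2 h
    have E1 : ∀ p : (D × T) × C → Prop, (∀ q, DP L N (fun c => p (q, c))) →
        (∀ᶠ (h : (D × T) × C) in tens (tens G Z) Γ, p h) →
        ∀ᶠ (q : D × T) in tens G Z, ∀ᶠ (q' : C × ((D × T) × C)) in K, p (q, q'.1) := by
      intro p hp h
      rw [ev_tens (F := tens G Z)] at h
      filter_upwards [h] with q hq
      exact hK1' _ (hp q) hq
    refine ⟨((D × T) × C) × ((D × T) × C),
      (tens (tens G Z) K).map (fun t => ((t.1, t.2.1), t.2.2)), gcons fun ν h => x ν h.1.2,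
      gcons (dnode d), gcons (cnode c),
      fun t => (t.1.1.1 :: δ t.1.1.2) ++ (t.2.1.1 :: δ t.2.1.2), (k + 1) + (k + 1),
      ?_, ?_, ?_, ?_, ?_⟩
    · rintro (_ | ⟨e, ν⟩) hν p h
      · simp at hν
      have hν' : ν.length = s := by simpa using hν
      have h4 : ∀ᶠ (h : (D × T) × C) in tens (tens G Z) Γ, p (x ν h.1.2) := by
        rw [ev_tens, ev_tens]
        refine Filter.Eventually.of_forall fun _ => ?_
        filter_upwards [hm ν hν' p h] with t ht
        exact Filter.Eventually.of_forall fun _ => ht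
      rw [ev_map, ev_tens (F := tens G Z)]
      rcases e
      · exact Filter.Eventually.of_forall fun _ => hK2' _ h4
      · exact E1 _ (fun q => DP.const (p (x ν q.2))) h4
    · intro p
      rw [ev_map, ev_tens (F := tens G Z), ev_lw_add, ← hδ1]
      refine Filter.eventually_congr (Filter.Eventually.of_forall fun q => ?_)
      have key : ∀ p' : D × T → Prop, (∀ᶠ (q' : D × T) in tens G Z, p' q') →
          ∀ᶠ (q' : C × ((D × T) × C)) in K, p' q'.2.1 := by
        intro p' h
        refine hK2' (fun h => p' h.1) ?_
        rw [ev_tens (F := tens G Z)]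
        filter_upwards [h] with q hq
        exact Filter.Eventually.of_forall fun _ => hq
      rw [← hδ1]
      constructor
      · intro h
        by_contra hc
        rw [← Ultrafilter.eventually_not] at hc
        obtain ⟨q', h5, h6⟩ := (h.and (key _ hc)).exists
        exact h6 h5
      · intro h
        exact key (fun q' => p ((q.1 :: δ q.2) ++ (q'.1 :: δ q'.2))) h
    · have key : ∀ η : List Bool, η.length ≤ s → ∀ h : (D × T) × C,
          dnode d η h ∈ h.1.1 :: δ h.1.2 := by
        rintro (_ | ⟨e, η⟩) hη h
        · simp [dnode]
        · exact List.mem_cons_of_mem _ (hdn _ (by simp) hη _)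
      rintro (_ | ⟨e, η⟩) h4 h5 t
      · exact absurd rfl h4
      · have := key η (by simpa using h5)
        rcases e
        · exact List.mem_append_right _ (this t.2)
        · exact List.mem_append_left _ (this t.1)
    · rintro (_ | ⟨e, ν⟩) hν (_ | ⟨e', η⟩) h4 h5
      · simp at hν
      · simp at hν
      · exact absurd rfl h4
      · obtain ⟨rfl, h5'⟩ := List.cons_prefix_cons.1 h5
        have hν' : ν.length = s := by simpa using hν
        have key : ∀ᶠ (h : (D × T) × C) in tens (tens G Z) Γ,
            α (x ν h.1.2) (dnode d η h) ∧ β (x ν h.1.2) (cnode c η h) := by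
          rw [ev_tens (F := tens G Z), ev_tens]
          rcases η with _ | ⟨e, η⟩
          · filter_upwards [h2] with d1 hd1
            filter_upwards [hm ν hν' _ hd1, hm ν hν' _ h1] with t ht1 ht2
            filter_upwards [ht2] with c1 hc1
            exact ⟨ht1, hc1⟩
          · refine Filter.Eventually.of_forall fun _ => ?_
            filter_upwards [hp ν hν' (e :: η) (by simp) h5'] with t ht
            exact Filter.Eventually.of_forall fun _ => ht
        rw [ev_map, ev_tens (F := tens G Z)]
        rcases e'
        · exact Filter.Eventually.of_forall fun _ => hK2' _ key
        · refine E1 _ (fun q => ?_) key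
          rcases η with _ | ⟨e, η⟩
          · exact (DP.const (α (x ν q.2) q.1)).and (hβ.comp (f := fun _ => x ν q.2) (g := fun c => c)
              (by fun_prop) (by fun_prop))
          · exact DP.const (α (x ν q.2) (d (e :: η) q.2) ∧ β (x ν q.2) (c (e :: η) q.2))
    · intro η₁ η₂ h4 h5
      rw [ev_map, ev_tens (F := tens G Z)]
      rcases prefix_cases h5 with ⟨rfl, η, rfl⟩ | ⟨e, η, η', rfl, rfl, h6⟩
      · refine Filter.Eventually.of_forall fun q => ?_
        filter_upwards [hK3] with q' hq'
        rintro ⟨a, ⟨ha1, ha2⟩, ha3, ha4⟩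
        refine hno a q'.1 (dnode d η q'.2) ha1 ha4 (hq' _ ?_)
        rcases η with _ | ⟨e, η⟩
        · simp [dnode]
        · exact List.mem_cons_of_mem _ (hdn _ (by simp) (by simpa using h4) _)
      · obtain ⟨e', η'', rfl⟩ : ∃ d η'', η' = d :: η'' := by
          rcases η' with _ | ⟨d, η''⟩
          · simp at h6
          · exact ⟨_, _, rfl⟩
        obtain ⟨f, ζ, hf⟩ : ∃ f ζ, η ++ [true] = f :: ζ := by
          rcases η with _ | ⟨d, η''⟩
          · exact ⟨_, _, rfl⟩
          · exact ⟨_, _, rfl⟩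
        have h7 := hi η (e' :: η'') (by simpa using h4) h6
        rw [hf] at h7
        have key : ∀ᶠ (h : (D × T) × C) in tens (tens G Z) Γ,
            ¬∃ a, (α a (dnode d (e' :: η'') h) ∧ β a (cnode c (e' :: η'') h)) ∧
              (α a (dnode d (f :: ζ) h) ∧ β a (cnode c (f :: ζ) h)) := by
          rw [ev_tens (F := tens G Z), ev_tens]
          refine Filter.Eventually.of_forall fun _ => ?_
          filter_upwards [h7] with t ht
          exact Filter.Eventually.of_forall fun _ => ht
        rw [List.cons_append, hf]
        rcases e
        · exact Filter.Eventually.of_forall fun _ => hK2' _ key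
        · exact E1 _ (fun q => DP.const (¬∃ a, (α a (d (e' :: η'') q.2) ∧ β a (c (e' :: η'') q.2)) ∧
              (α a (d (f :: ζ) q.2) ∧ β a (c (f :: ζ) q.2)))) key

theorem amalg (hN : NoSOP L N) {Γ : Ultrafilter C} {G : Ultrafilter D} {P : Ultrafilter X}
    {α : X → D → Prop} {β : X → C → Prop} {r : C → D → Prop}
    (hα : DP2 L N α) (hβ : DP2 L N β)
    (h1 : ∀ᶠ a in P, ∀ᶠ c in Γ, β a c) (h2 : ∀ᶠ d in G, ∀ᶠ a in P, α a d)
    (h3 : ∀ θ : C → Prop, DP L N θ → (∀ᶠ c in Γ, θ c) → Con G (fun d c => r c d ∧ θ c)) :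
    ∃ a c d, α a d ∧ β a c ∧ r c d := by
  by_contra hcon
  have hno : ∀ a c d, α a d → β a c → r c d → False :=
    fun a c d h1 h2 h3 => hcon ⟨a, c, d, h1, h2, h3⟩
  refine hN (D × C) X (fun q a => α a q.1 ∧ β a q.2) ?_ fun s => ?_
  · exact (hα.comp (f := fun q : (D × C) × X => q.2) (g := fun q => q.1.1) (by fun_prop)
      (by fun_prop)).and (hβ.comp (by fun_prop) (by fun_prop))
  obtain ⟨T, Z, x, d, c, δ, k, hm, hδ, hdn, hp, hi⟩ := amalgTree hβ h1 h2 h3 hno s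
  have h1 : ∀ᶠ t in Z, ∀ q ∈ {q : List Bool × List Bool | q.1 ∈ {l : List Bool | l.length ≤ s} ∧
      q.2 ∈ {l : List Bool | l.length ≤ s}}, q.1.length = s → q.2 ≠ [] → q.2 <+: q.1 →
      α (x q.1 t) (d q.2 t) ∧ β (x q.1 t) (c q.2 t) := by
    refine (Filter.eventually_all_finite ?_).2 ?_
    · exact (List.finite_length_le Bool s).prod (List.finite_length_le Bool s)
    · rintro ⟨ν, η⟩ -
      by_cases h : ν.length = s ∧ η ≠ [] ∧ η <+: ν
      · filter_upwards [hp ν h.1 η h.2.1 h.2.2] with t ht _ _ _ using ht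
      · exact Filter.Eventually.of_forall fun t h1 h2 h3 => absurd ⟨h1, h2, h3⟩ h
  have h2 : ∀ᶠ t in Z, ∀ q ∈ {q : List Bool × List Bool | q.1 ∈ {l : List Bool | l.length ≤ s} ∧
      q.2 ∈ {l : List Bool | l.length ≤ s}}, (q.1 ++ [false]) <+: q.2 →
      ¬∃ a, (α a (d q.2 t) ∧ β a (c q.2 t)) ∧
          (α a (d (q.1 ++ [true]) t) ∧ β a (c (q.1 ++ [true]) t)) := by
    refine (Filter.eventually_all_finite ?_).2 ?_
    · exact (List.finite_length_le Bool s).prod (List.finite_length_le Bool s)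
    · rintro ⟨η₁, η₂⟩ ⟨_, h2⟩
      by_cases hpre : (η₁ ++ [false]) <+: η₂
      · filter_upwards [hi η₁ η₂ h2 hpre] with t ht _ using ht
      · exact Filter.Eventually.of_forall fun t ht => absurd ht hpre
  obtain ⟨t, ht1, ht2⟩ := (h1.and h2).exists
  refine ⟨fun η => (d η t, c η t), ?_, ?_⟩
  · intro ν hν
    refine ⟨x ν t, fun η h3 h4 => ht1 (ν, η) ⟨hν.le, ?_⟩ hν h3 h4⟩
    exact h4.length_le.trans hν.le
  · intro η₁ η₂ h3 h4
    refine ht2 (η₁, η₂) ⟨?_, h3⟩ h4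
    have := h4.length_le
    simp at this
    show η₁.length ≤ s
    omega

end Amalg


section Iter

open Filter

variable {L : FirstOrder.Language.{x, y}} {N : Type w} [L.Structure N]
variable {X C D : Type w} [DSpace N X] [DSpace N C] [DSpace N D]

theorem itStep (hN : NoSOP L N) {Γ : Ultrafilter C} {G : Ultrafilter D} {P : Ultrafilter X}
    {α : X → D → Prop} {β : X → C → Prop} {r : C → D → Prop}
    (hα : DP2 L N α) (hβ : DP2 L N β) (hr : DP2 L N r)
    (h1 : ∀ᶠ a in P, ∀ᶠ c in Γ, β a c) (h2 : ∀ᶠ d in G, ∀ᶠ a in P, α a d)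
    (h3 : ∀ θ : C → Prop, DP L N θ → (∀ᶠ c in Γ, θ c) → Con G (fun d c => r c d ∧ θ c))
    (θ : C → Prop) (hθ : DP L N θ) (hθΓ : ∀ᶠ c in Γ, θ c) :
    Con (tens G P) (fun q c => (r c q.1 ∧ α q.2 q.1 ∧ β q.2 c) ∧ θ c) := by
  have hA := conSym hN (F := G) (G := Γ) (ρ := fun d c => r c d)
    (hr.comp (f := fun q : D × C => q.2) (g := fun q => q.1) (by fun_prop) (by fun_prop)) h3
  have hrs : ∀ m, DP2 L N (fun (cs : Fin m → C) (d : D) => ∀ i, r (cs i) d) := by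
    intro m
    refine DP.forallFin fun i => ?_
    exact hr.comp (f := fun q : (Fin m → C) × D => q.1 i) (g := fun q => q.2)
      (DMap.apply N (f := fun q : (Fin m → C) × D => q.1) (by fun_prop) i) (by fun_prop)
  have hβs : ∀ m, DP2 L N (fun (a : X) (cs : Fin m → C) => ∀ i, β a (cs i)) := by
    intro m
    refine DP.forallFin fun i => ?_
    exact hβ.comp (f := fun q : X × (Fin m → C) => q.1) (g := fun q => q.2 i)
      (by fun_prop) (DMap.apply N (f := fun q : X × (Fin m → C) => q.2) (by fun_prop) i)
  have hB : ∀ m, ∀ θ : (Fin (m + 1) → C) → Prop, DP L N θ →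
      (∀ᶠ v in (pw Γ (m + 1) : Filter (Fin (m + 1) → C)), θ v) →
      Con G (fun d v => (∀ i, r (v i) d) ∧ θ v) := by
    intro m θ hθ1 hθ2
    refine conSym hN (F := pw Γ (m + 1)) (G := G) (ρ := fun v d => ∀ i, r (v i) d) (hrs (m + 1))
      ?_ θ hθ1 hθ2
    intro θ' h4 h5
    refine ((hA θ' h4 h5).regroup (m + 1)).mono fun o => ⟨o, fun v hv => ?_⟩
    exact ⟨fun i => (hv i).1, (hv 0).2⟩
  have hρ : DP2 L N (fun (c : C) (q : D × X) => r c q.1 ∧ α q.2 q.1 ∧ β q.2 c) :=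
    (hr.comp (f := fun q : C × (D × X) => q.1) (by fun_prop) (by fun_prop)).and
      ((hα.comp (f := fun q : C × (D × X) => q.2.2) (by fun_prop) (by fun_prop)).and
        (hβ.comp (f := fun q : C × (D × X) => q.2.2) (by fun_prop) (by fun_prop)))
  refine conSym hN (F := Γ) (G := tens G P)
    (ρ := fun c q => r c q.1 ∧ α q.2 q.1 ∧ β q.2 c) hρ ?_ θ hθ hθΓ
  intro θ' h4 h5
  rw [con_pw]
  intro m
  rcases m with _ | m
  · rw [ev_pw_zero]
    obtain ⟨q, -⟩ := h5.exists
    exact ⟨q, fun i => i.elim0⟩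
  by_contra hcon
  rw [← Ultrafilter.eventually_not] at hcon
  have hΘ : DP L N (fun v : Fin (m + 1) → C => ¬∃ q : D × X,
      ∀ i, (r (v i) q.1 ∧ α q.2 q.1 ∧ β q.2 (v i)) ∧ θ' q) := by
    refine (DP.ex (DP.forallFin fun i => DP.and ?_ ?_)).not
    · exact hρ.comp (f := fun t : (Fin (m + 1) → C) × (D × X) => t.1 i) (g := fun t => t.2)
        (DMap.apply N (f := fun q : (Fin (m + 1) → C) × (D × X) => q.1) (by fun_prop) i)
        (by fun_prop)
    · exact h4.comp (by fun_prop)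
  obtain ⟨a, v, d, ⟨ha1, ha2⟩, ha3, ha4, ha5⟩ := amalg hN (Γ := pw Γ (m + 1)) (G := G) (P := P)
    (α := fun a d => α a d ∧ θ' (d, a)) (β := fun a v => ∀ i, β a (v i))
    (r := fun v d => (∀ i, r (v i) d) ∧ ¬∃ q : D × X,
      ∀ i, (r (v i) q.1 ∧ α q.2 q.1 ∧ β q.2 (v i)) ∧ θ' q)
    (DP.and hα (h4.comp (f := fun q : X × D => (q.2, q.1)) (by fun_prop))) (hβs (m + 1))
    (by
      filter_upwards [h1] with a ha
      exact ev_pw_all ha)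
    (by
      rw [ev_tens] at h5
      filter_upwards [h2, h5] with d e1 e2
      exact e1.and e2)
    (by
      intro θ'' e1 e2
      refine (hB m _ (hΘ.and e1) (hcon.and e2)).mono fun o => ⟨o, fun d hd => ?_⟩
      exact ⟨⟨hd.1, hd.2.1⟩, hd.2.2⟩)
  exact ha5 ⟨(d, a), fun i => ⟨⟨ha4 i, ha1, ha3 i⟩, ha2⟩⟩

/-- Arrays of independent elements, the newest one being outermost. -/
noncomputable def cArr {X : Type w} (n : ℕ) (U : Ultrafilter X) (x0 : X) : ℕ → Ultrafilter (Fin n → X)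
  | 0 => pure fun _ => x0
  | j + 1 => (tens U (cArr n U x0 j)).map fun q i => if i.1 = j then q.1 else q.2 i

/-- Arrays of independent elements, the newest one being innermost. -/
noncomputable def dArr {X : Type w} (n : ℕ) (U : Ultrafilter X) (x0 : X) : ℕ → Ultrafilter (Fin n → X)
  | 0 => pure fun _ => x0
  | j + 1 => (tens (dArr n U x0 j) U).map fun q i => if i.1 = j then q.2 else q.1 i

theorem cArr_marg {X : Type w} {n : ℕ} {U : Ultrafilter X} {x0 : X} {p : X → Prop}
    (h : ∀ᶠ a in U, p a) (j : ℕ) : ∀ᶠ v in (cArr n U x0 j : Filter (Fin n → X)),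
      ∀ i : Fin n, i.1 < j → p (v i) := by
  induction j with
  | zero => exact Filter.Eventually.of_forall fun v i hi => by omega
  | succ j ih =>
    rw [cArr, ev_map, ev_tens]
    filter_upwards [h] with a ha
    filter_upwards [ih] with v hv i hi
    by_cases hij : i.1 = j
    · simpa [hij] using ha
    · simpa [hij] using hv i (by omega)

theorem dArr_marg {X : Type w} {n : ℕ} {U : Ultrafilter X} {x0 : X} {p : X → Prop}
    (h : ∀ᶠ a in U, p a) (j : ℕ) : ∀ᶠ v in (dArr n U x0 j : Filter (Fin n → X)),
      ∀ i : Fin n, i.1 < j → p (v i) := by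
  induction j with
  | zero => exact Filter.Eventually.of_forall fun v i hi => by omega
  | succ j ih =>
    rw [dArr, ev_map, ev_tens]
    filter_upwards [ih] with v hv
    filter_upwards [h] with a ha i hi
    by_cases hij : i.1 = j
    · simpa [hij] using ha
    · simpa [hij] using hv i (by omega)

theorem copThm (hN : NoSOP L N) {U V : Ultrafilter X} (hUV : Agr L N U V) {n : ℕ}
    {Cl : (Fin n → X) → Prop} {NE : X → X → Prop} (hCl : DP L N Cl) (hNE : DP2 L N NE)
    {K : Set X} (hKU : ∀ᶠ a in U, a ∈ K) (hK : ∀ v : Fin n → X, (∀ i, v i ∈ K) → Cl v)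
    (hV : ∀ᶠ a in V, ∀ᶠ b in V, NE a b) :
    ∃ c d : Fin n → X, (∀ m, m ≤ n → Cl (fun i => if i.1 < m then d i else c i)) ∧
      ∀ i k : Fin n, i < k → NE (d k) (c i) := by
  obtain ⟨x0, hx0⟩ := hKU.exists
  let r : ℕ → (Fin n → X) → (Fin n → X) → (Fin n → X) → Prop := fun j y c d =>
    (∀ m : Fin (j + 1), Cl (fun i => if i.1 < m.1 then d i else if i.1 < j then c i else y i)) ∧
    ∀ q : Fin n × Fin n, q.1 < q.2 → q.2.1 < j → NE (d q.2) (c q.1)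
  have hr : ∀ j y, DP2 L N (r j y) := by
    intro j y
    refine DP.and (DP.forallFin fun m => ?_) (DP.forallFin fun q => ?_)
    · refine hCl.comp (f := fun (t : (Fin n → X) × (Fin n → X)) i =>
        if i.1 < m.1 then t.2 i else if i.1 < j then t.1 i else y i) (DMap.pi N fun i => ?_)
      split_ifs
      · exact DMap.apply N (f := fun t : (Fin n → X) × (Fin n → X) => t.2) (by fun_prop) i
      · exact DMap.apply N (f := fun t : (Fin n → X) × (Fin n → X) => t.1) (by fun_prop) i
      · fun_prop
    · refine (DP.const _).imp ((DP.const _).imp ?_)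
      exact hNE.comp (DMap.apply N (f := fun t : (Fin n → X) × (Fin n → X) => t.2) (by fun_prop) _)
        (DMap.apply N (f := fun t : (Fin n → X) × (Fin n → X) => t.1) (by fun_prop) _)
  have main : ∀ j, j ≤ n → ∀ y : Fin n → X, (∀ i, y i ∈ K) → ∀ θ : (Fin n → X) → Prop,
      DP L N θ → (∀ᶠ c in (cArr n U x0 j : Filter (Fin n → X)), θ c) →
      Con (dArr n U x0 j) (fun d c => r j y c d ∧ θ c) := by
    intro j
    induction j with
    | zero =>
      intro _ y hy θ _ hθ m
      refine Filter.Eventually.of_forall fun l => ?_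
      have h0 : θ (fun _ => x0) := hθ
      refine ⟨fun _ => x0, fun a _ => ⟨⟨fun m => ?_, fun q _ h => by omega⟩, h0⟩⟩
      have : m.1 = 0 := by omega
      simpa [this] using hK y hy
    | succ j ih =>
      intro hj y' hy' θ hθ hθΓ
      rw [cArr, ev_map, ev_tens] at hθΓ
      obtain ⟨yj, hyj, hθj⟩ := (hKU.and hθΓ).exists
      let y : Fin n → X := fun i => if i.1 = j then yj else y' i
      have hy : ∀ i, y i ∈ K := by
        intro i
        by_cases h : i.1 = j
        · simpa [y, h] using hyj
        · simpa [y, h] using hy' i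
      have hα : DP2 L N (fun (a : X) (d : Fin n → X) =>
          Cl (fun i => if i.1 < j then d i else if i.1 = j then a else y i)) := by
        refine hCl.comp (f := fun (t : X × (Fin n → X)) i =>
          if i.1 < j then t.2 i else if i.1 = j then t.1 else y i) (DMap.pi N fun i => ?_)
        split_ifs
        · exact DMap.apply N (f := fun t : X × (Fin n → X) => t.2) (by fun_prop) i
        · fun_prop
        · fun_prop
      have hβ : DP2 L N (fun (a : X) (c : Fin n → X) => ∀ i : Fin n, i.1 < j → NE a (c i)) := by
        refine DP.forallFin fun i => (DP.const _).imp ?_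
        exact hNE.comp (f := fun t : X × (Fin n → X) => t.1) (by fun_prop)
          (DMap.apply N (f := fun t : X × (Fin n → X) => t.2) (by fun_prop) _)
      have hθ' : DP L N (fun c : Fin n → X => θ (fun i => if i.1 = j then yj else c i)) := by
        refine hθ.comp (f := fun (c : Fin n → X) i => if i.1 = j then yj else c i)
          (DMap.pi N fun i => ?_)
        split_ifs <;> fun_prop
      have hit := itStep hN (Γ := cArr n U x0 j) (G := dArr n U x0 j) (P := V) hα hβ (hr j y)
        (by
          filter_upwards [hV] with a ha
          refine cArr_marg (hUV.symm _ ?_ ha) j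
          exact hNE.comp (by fun_prop) (by fun_prop))
        (by
          filter_upwards [dArr_marg (n := n) (x0 := x0) hKU j] with d hd
          refine hUV _ (hα.comp (f := fun a => a) (g := fun _ => d) (by fun_prop) (by fun_prop)) ?_
          filter_upwards [hKU] with a ha
          refine hK _ fun i => ?_
          split_ifs with h1 h2
          · exact hd i h1
          · exact ha
          · exact hy i)
        (ih (by omega) y hy) _ hθ' hθj
      have hkl := kimLemma hN (Agr.tens (F := dArr n U x0 j) hUV.symm) (by
        refine DP.and (DP.and ?_ (DP.and ?_ ?_)) ?_
        · exact (hr j y).comp (f := fun t : ((Fin n → X) × X) × (Fin n → X) => t.2)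
            (g := fun t => t.1.1) (by fun_prop) (by fun_prop)
        · exact hα.comp (f := fun t : ((Fin n → X) × X) × (Fin n → X) => t.1.2)
            (g := fun t => t.1.1) (by fun_prop) (by fun_prop)
        · exact hβ.comp (f := fun t : ((Fin n → X) × X) × (Fin n → X) => t.1.2)
            (g := fun t => t.2) (by fun_prop) (by fun_prop)
        · exact hθ'.comp (f := fun t : ((Fin n → X) × X) × (Fin n → X) => t.2)
            (by fun_prop)) hit
      rw [dArr, Con.map]
      refine hkl.mono fun c => ⟨fun i => if i.1 = j then yj else c i, ?_⟩
      rintro ⟨d, a⟩ ⟨⟨⟨h1, h2⟩, h3, h4⟩, h5⟩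
      refine ⟨⟨fun m => ?_, ?_⟩, h5⟩
      · by_cases hm : m.1 = j + 1
        · convert h3 using 2 with i
          simp only [hm, y]
          split_ifs <;> first | rfl | omega
        · convert h1 ⟨m.1, by omega⟩ using 2 with i
          simp only [y]
          split_ifs <;> first | rfl | omega
      · rintro ⟨i, k⟩ hik hk
        have hik' : i.1 < k.1 := hik
        dsimp only at hk ⊢
        by_cases hkj : k.1 = j
        · rw [if_pos hkj, if_neg (by omega)]
          exact h4 i (by omega)
        · rw [if_neg hkj, if_neg (by omega)]
          exact h2 (i, k) hik (by dsimp only; omega)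
  have hfin := (main n le_rfl (fun _ => x0) (fun _ => hx0) (fun _ => True) DP.true'
    (Filter.Eventually.of_forall fun _ => trivial)).one
  obtain ⟨d, c, ⟨h1, h2⟩, -⟩ := hfin.exists
  refine ⟨c, d, fun m hm => ?_, fun i k hik => h2 (i, k) hik k.2⟩
  convert h1 ⟨m, by omega⟩ using 2 with i
  simp

end Iter


section FromInternal

open Filter

variable {L : FirstOrder.Language.{x, y}}

theorem dp2_finite {N : Type w} [L.Structure N] {Q O : Type w} [DSpace N Q] [DSpace N O]
    {ρ : Q → O → Prop} (h : DP2 L N ρ) :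
    ∃ (k n : ℕ) (ψ : L.Formula (Fin k ⊕ Fin n)) (enc : Q → Fin n → N) (dec : O ≃ (Fin k → N)),
      ∀ q o, ρ q o ↔ ψ.Realize (Sum.elim (dec o) (enc q)) := by
  classical
  obtain ⟨φ, hφ⟩ := h
  let iQ := DSpace.ix N Q
  let iO := DSpace.ix N O
  let J := {p : N // (Sum.inl p : N ⊕ (iQ ⊕ iO)) ∈ BoundedFormula.freeVarFinset φ}
  have : Finite J := Finite.of_injective
    (fun p : J => (⟨Sum.inl p.1, p.2⟩ : BoundedFormula.freeVarFinset φ)) (by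
      intro a b h
      apply Subtype.ext
      simpa using congrArg (fun t => t.1) h)
  have : Finite iQ := DSpace.fin
  have : Finite iO := DSpace.fin
  obtain ⟨k, ⟨eO⟩⟩ := Finite.exists_equiv_fin iO
  obtain ⟨n, ⟨eP⟩⟩ := Finite.exists_equiv_fin (iQ ⊕ J)
  let f : BoundedFormula.freeVarFinset φ → Fin k ⊕ Fin n := fun a =>
    match a with
    | ⟨Sum.inl p, hp⟩ => Sum.inr (eP (Sum.inr ⟨p, hp⟩))
    | ⟨Sum.inr (Sum.inl i), _⟩ => Sum.inr (eP (Sum.inl i))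
    | ⟨Sum.inr (Sum.inr i), _⟩ => Sum.inl (eO i)
  refine ⟨k, n, BoundedFormula.restrictFreeVar φ f,
    fun q j => Sum.elim (DSpace.e (N := N) q) (fun p : J => p.1) (eP.symm j),
    (DSpace.e (N := N) (X := O)).trans (Equiv.arrowCongr eO (Equiv.refl N)), fun q o => ?_⟩
  have := hφ (q, o)
  refine Iff.trans (by exact this) ?_
  unfold Formula.Realize
  symm
  apply BoundedFormula.realize_restrictFreeVar
  rintro ⟨p | i | i, hp⟩
  · simp [f]
  · simp [f]; rfl
  · simp [f]; rfl

theorem sop1_of_fin {N : Type z} [L.Structure N] [Nonempty N] {Q O : Type z} [DSpace N Q]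
    [DSpace N O] {ρ : Q → O → Prop} (h : DP2 L N ρ) (hs : FinSOP1 ρ) :
    ∃ (W : Type z) (S : L.Structure W), L.completeTheory N = @Language.completeTheory L W S ∧
      @SOP1PatternIn L W S := by
  classical
  obtain ⟨k, n, ψ, enc, dec, hψ⟩ := dp2_finite h
  choose b hb1 hb2 using hs
  let u : Ultrafilter ℕ := hyperfilter ℕ
  refine ⟨(u : Filter ℕ).Product (fun _ => N), inferInstance, ?_, k, n, ψ,
    fun η j => ((fun s => enc (b s (false :: η)) j : ℕ → N) : (u : Filter ℕ).Product (fun _ => N)),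
    ?_, ?_⟩
  · ext θ
    rw [mem_completeTheory, mem_completeTheory, Ultraproduct.sentence_realize]
    simp
  · intro σ t
    have : ∀ s, ∃ o, ∀ η : List Bool, η ≠ [] → η <+: (List.ofFn fun i : Fin s =>
        if i.1 = 0 then false else σ (i.1 - 1)) → ρ (b s η) o := fun s => hb1 s _ (by simp)
    choose o ho using this
    refine ⟨fun j => ((fun s => dec (o s) j : ℕ → N) : (u : Filter ℕ).Product (fun _ => N)), ?_⟩
    intro i _
    have key := Ultraproduct.realize_formula_cast (u := u) (M := fun _ => N) ψ
      (Sum.elim (fun j s => dec (o s) j)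
        (fun j s => enc (b s (false :: List.ofFn fun j : Fin i => σ j)) j))
    have e1 : (fun q => ((Sum.elim (fun j s => dec (o s) j)
        (fun j s => enc (b s (false :: List.ofFn fun j : Fin i => σ j)) j) q : ℕ → N) :
          (u : Filter ℕ).Product (fun _ => N))) = Sum.elim
          (fun j => ((fun s => dec (o s) j : ℕ → N) : (u : Filter ℕ).Product (fun _ => N)))
          (fun j => ((fun s => enc (b s (false :: List.ofFn fun j : Fin i => σ j)) j : ℕ → N) :
            (u : Filter ℕ).Product (fun _ => N))) := by
      funext q; rcases q with q | q <;> rfl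
    rw [e1] at key
    refine key.2 ?_
    have : ∀ᶠ s in (u : Filter ℕ), i + 1 ≤ s :=
      (Nat.hyperfilter_le_atTop : (u : Filter ℕ) ≤ atTop) (eventually_ge_atTop (i + 1))
    filter_upwards [this] with s hsi
    have e2 : (fun q => (Sum.elim (fun j s => dec (o s) j)
        (fun j s => enc (b s (false :: List.ofFn fun j : Fin i => σ j)) j) q : ℕ → N) s) =
        Sum.elim (dec (o s)) (enc (b s (false :: List.ofFn fun j : Fin i => σ j))) := by
      funext q; rcases q with q | q <;> rfl
    rw [e2, ← hψ]
    apply ho s _ (by simp)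
    obtain ⟨s, rfl⟩ : ∃ s', s = s' + 1 := ⟨s - 1, by omega⟩
    rw [List.ofFn_succ]
    simp only [Fin.val_zero, if_true, Fin.val_succ, Nat.add_eq_zero_iff, one_ne_zero, and_false,
      if_false, Nat.add_sub_cancel, List.cons_prefix_cons, true_and]
    rw [List.prefix_iff_eq_take]
    apply List.ext_getElem
    · simp; omega
    · intro a h1 h2; simp
  · rintro η₁ η₂ hη ⟨xx, h1, h2⟩
    have : ∀ j, ∃ f : ℕ → N, ((f : ℕ → N) : (u : Filter ℕ).Product (fun _ => N)) = xx j :=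
      fun j => Quotient.exists_rep (xx j)
    choose g hg using this
    have hx : ∀ η : List Bool, ψ.Realize (Sum.elim xx
        (fun j => ((fun s => enc (b s (false :: η)) j : ℕ → N) : (u : Filter ℕ).Product (fun _ => N))))
        → ∀ᶠ s in (u : Filter ℕ), ρ (b s (false :: η)) (dec.symm (fun j => g j s)) := by
      intro η hh
      have key := Ultraproduct.realize_formula_cast (u := u) (M := fun _ => N) ψ
        (Sum.elim (fun j s => g j s) (fun j s => enc (b s (false :: η)) j))
      have e1 : (fun q => ((Sum.elim (fun j s => g j s)
          (fun j s => enc (b s (false :: η)) j) q : ℕ → N) :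
            (u : Filter ℕ).Product (fun _ => N))) = Sum.elim xx
            (fun j => ((fun s => enc (b s (false :: η)) j : ℕ → N) :
              (u : Filter ℕ).Product (fun _ => N))) := by
        funext q
        rcases q with q | q
        · exact hg q
        · rfl
      rw [e1] at key
      filter_upwards [key.1 hh] with s hsi
      rw [hψ, Equiv.apply_symm_apply]
      convert hsi using 1
      funext q; rcases q with q | q <;> rfl
    have hlen : ∀ᶠ s in (u : Filter ℕ), η₂.length + 1 ≤ s :=
      (Nat.hyperfilter_le_atTop : (u : Filter ℕ) ≤ atTop) (eventually_ge_atTop _)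
    obtain ⟨s, hs1, hs2, hs3⟩ := ((hx _ h1).and ((hx _ h2).and hlen)).exists
    refine hb2 s (false :: η₁) (false :: η₂) (by simpa using hs3) ?_ ⟨_, hs1, hs2⟩
    simpa using hη

theorem pattern_equiv {W : Type z} {W' : Type w} [L.Structure W] [L.Structure W'] (e : W ≃[L] W')
    (h : SOP1PatternIn L W) : SOP1PatternIn L W' := by
  obtain ⟨k, n, φ, bt, h1, h2⟩ := h
  have hr : ∀ (xx : Fin k → W) (yy : Fin n → W),
      φ.Realize (Sum.elim (fun j => e (xx j)) (fun j => e (yy j))) ↔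
        φ.Realize (Sum.elim xx yy) := by
    intro xx yy
    rw [← StrongHomClass.realize_formula e φ, Sum.comp_elim]
    rfl
  refine ⟨k, n, φ, fun η j => e (bt η j), fun σ s => ?_, fun η₁ η₂ hη => ?_⟩
  · obtain ⟨xx, hxx⟩ := h1 σ s
    exact ⟨fun j => e (xx j), fun i hi => (hr _ _).2 (hxx i hi)⟩
  · rintro ⟨xx, hx1, hx2⟩
    have : xx = fun j => e (e.symm (xx j)) := by funext j; simp
    rw [this] at hx1 hx2
    exact h2 η₁ η₂ hη ⟨_, (hr _ _).1 hx1, (hr _ _).1 hx2⟩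

theorem noSOP_of {A : Type z} [L.Structure A] (hA : IsNSOP1Th L A) {N : Type z} [L.Structure N]
    [Nonempty N] (hEq : L.completeTheory N = L.completeTheory A) : NoSOP L N := by
  intro Q O _ _ ρ hρ hs
  obtain ⟨W, S, hW, hp⟩ := sop1_of_fin hρ hs
  letI := S
  let e : W ≃ ULift.{max x y} W := Equiv.ulift.symm
  letI S' : L.Structure (ULift.{max x y} W) := e.inducedStructure
  let e' : W ≃[L] ULift.{max x y} W := e.inducedStructureEquiv
  refine hA ⟨ULift.{max x y} W, S', ?_, pattern_equiv e' hp⟩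
  rw [← hEq, hW]
  exact StrongHomClass.elementarilyEquivalent e'

end FromInternal


section Comb

variable {X : Type z}

/-- The first `i` entries of a sequence. -/
def hist {Y : Type z} (ω : ℕ → Y) (i : ℕ) : List Y := (List.range i).map ω

theorem hist_succ {Y : Type z} (ω : ℕ → Y) (i : ℕ) : hist ω (i + 1) = hist ω i ++ [ω i] := by
  simp [hist, List.range_succ]

/-- An array read off from a tree along one path. -/
def TreeArr (b : List Bool → X) (ω : ℕ → X × X) : Prop :=
  ∃ η : ℕ → List Bool, (∀ i, η i <+: η (i + 1)) ∧ (∀ i, (ω i).1 = b (η i)) ∧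
    ∀ i j, i < j → ∃ η₁ η₂, (η₁ ++ [false]) <+: η₂ ∧ (ω i).2 = b (η₁ ++ [true]) ∧ (ω j).2 = b η₂

/-- The two entries in each row look alike, over the previous rows. -/
def RowLike (E : List (X × X) → X → Prop) (ω : ℕ → X × X) : Prop :=
  ∀ i, E (hist ω i) (ω i).1 ↔ E (hist ω i) (ω i).2

/-- The node extending `η` by `l` zeros and a one. -/
def zo (η : List Bool) (l : ℕ) : List Bool := η ++ List.replicate l false ++ [true]

theorem exists_treeArr (b : List Bool → X) {ι : Type*} [Finite ι]
    (E : ι → List (X × X) → X → Prop) :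
    ∃ ω, TreeArr b ω ∧ ∀ e, RowLike (E e) ω := by
  classical
  have h1 : ∀ s : List (X × X) × List Bool, ∃ k l, k < l ∧
      ∀ e, E e s.1 (b (zo s.2 l)) ↔ E e s.1 (b (zo s.2 k)) := by
    intro s
    obtain ⟨k, l, hkl, hc⟩ := Finite.exists_ne_map_eq_of_infinite
      (fun l : ℕ => fun e : ι => E e s.1 (b (zo s.2 l)))
    rcases lt_or_gt_of_ne hkl with h | h
    · exact ⟨k, l, h, fun e => iff_of_eq (congrFun hc e).symm⟩
    · exact ⟨l, k, h, fun e => iff_of_eq (congrFun hc e)⟩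
  choose k l hkl hE using h1
  let st : ℕ → List (X × X) × List Bool := fun i => Nat.rec ([], [])
    (fun _ s => (s.1 ++ [(b (zo s.2 (l s)), b (zo s.2 (k s)))], zo s.2 (l s))) i
  let ω : ℕ → X × X := fun i => (b (zo (st i).2 (l (st i))), b (zo (st i).2 (k (st i))))
  have hst : ∀ i, st (i + 1) = ((st i).1 ++ [ω i], zo (st i).2 (l (st i))) := fun i => rfl
  have hh : ∀ i, (st i).1 = hist ω i := by
    intro i
    induction i with
    | zero => rfl
    | succ i ih => rw [hst, hist_succ, ih]
  have hpre : ∀ i, (st i).2 <+: (st (i + 1)).2 := by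
    intro i
    rw [hst]
    exact ⟨List.replicate (l (st i)) false ++ [true], by simp [zo]⟩
  have hmono : ∀ i j, i ≤ j → (st i).2 <+: (st j).2 := by
    intro i j hij
    induction j, hij using Nat.le_induction with
    | base => exact List.prefix_rfl
    | succ j _ ih => exact ih.trans (hpre j)
  refine ⟨ω, ⟨fun i => (st (i + 1)).2, fun i => hpre (i + 1), fun i => rfl, ?_⟩, ?_⟩
  · intro i j hij
    refine ⟨(st i).2 ++ List.replicate (k (st i)) false, zo (st j).2 (k (st j)), ?_, rfl, rfl⟩
    have a1 : (st i).2 ++ List.replicate (k (st i)) false ++ [false] <+: (st (i + 1)).2 := by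
      rw [hst]
      obtain ⟨r, hr⟩ : ∃ r, l (st i) = k (st i) + 1 + r :=
        ⟨l (st i) - k (st i) - 1, by have := hkl (st i); omega⟩
      refine ⟨List.replicate r false ++ [true], ?_⟩
      simp [zo, hr, List.replicate_add]
    have a2 : (st j).2 <+: zo (st j).2 (k (st j)) :=
      ⟨List.replicate (k (st j)) false ++ [true], by simp [zo]⟩
    exact (a1.trans (hmono _ _ hij)).trans a2
  · intro e i
    rw [← hh i]
    exact hE (st i) e

theorem exists_uf (b : List Bool → X) :
    ∃ F : Ultrafilter (ℕ → X × X), (∀ᶠ ω in (F : Filter (ℕ → X × X)), TreeArr b ω) ∧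
      ∀ E : List (X × X) → X → Prop, ∀ᶠ ω in (F : Filter (ℕ → X × X)), RowLike E ω := by
  classical
  obtain ⟨F, hF⟩ := Ultrafilter.exists_ultrafilter_of_finite_inter_nonempty
    (Set.range fun E : List (X × X) → X → Prop => {ω | TreeArr b ω ∧ RowLike E ω}) (by
      intro T hT
      have : ∀ t : T, ∃ E, {ω | TreeArr b ω ∧ RowLike E ω} = t.1 := fun t => hT t.2
      choose E hE using this
      obtain ⟨ω, h1, h2⟩ := exists_treeArr b E
      refine ⟨ω, ?_⟩
      intro t ht
      have hm : ω ∈ {ω | TreeArr b ω ∧ RowLike (E ⟨t, ht⟩) ω} := ⟨h1, h2 _⟩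
      rw [hE ⟨t, ht⟩] at hm
      exact hm)
  have hF' : ∀ E : List (X × X) → X → Prop,
      ∀ᶠ ω in (F : Filter (ℕ → X × X)), TreeArr b ω ∧ RowLike E ω := fun E => hF ⟨E, rfl⟩
  exact ⟨F, (hF' fun _ _ => True).mono fun _ h => h.1, fun E => (hF' E).mono fun _ h => h.2⟩

end Comb

section FinDepPower

variable {L : FirstOrder.Language.{x, y}} {A : Type z} [L.Structure A] {Y : Type z}

/-- Functions on sequences that depend on finitely many coordinates. -/
def FinDep (Y : Type z) (A : Type z) : Type z :=
  {f : (ℕ → Y) → A // ∃ i₀ : ℕ, ∀ ω ω' : ℕ → Y, (∀ j < i₀, ω j = ω' j) → f ω = f ω'}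

theorem finDep_common {ι : Type*} [Finite ι] (f : ι → FinDep Y A) :
    ∃ i₀ : ℕ, ∀ i, ∀ ω ω' : ℕ → Y, (∀ j < i₀, ω j = ω' j) → (f i).1 ω = (f i).1 ω' := by
  classical
  choose d hd using fun i => (f i).2
  have := Fintype.ofFinite ι
  refine ⟨Finset.univ.sup d, fun i ω ω' h => hd i ω ω' fun j hj => h j (lt_of_lt_of_le hj ?_)⟩
  exact Finset.le_sup (f := d) (Finset.mem_univ i)

theorem finDepPower [Nonempty A] (F : Ultrafilter (ℕ → Y)) :
    ∃ (N : Type z) (_ : L.Structure N) (cls : FinDep Y A → N), Function.Surjective cls ∧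
      ∀ {β : Type z} (φ : L.Formula β) (g : β → FinDep Y A),
        φ.Realize (fun i => cls (g i)) ↔
          ∀ᶠ ω in (F : Filter (ℕ → Y)), φ.Realize (fun i => (g i).1 ω) := by
  classical
  let PW := (F : Filter (ℕ → Y)).Product (fun _ => A)
  letI : L.Structure PW := Ultraproduct.structure
  let mk : ((ℕ → Y) → A) → PW := fun f => (f : (F : Filter (ℕ → Y)).Product (fun _ => A))
  let S : L.Substructure PW :=
    { carrier := Set.range fun f : FinDep Y A => mk f.1
      fun_mem := by
        intro n f xs hxs
        choose g hg using hxs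
        obtain ⟨i₀, hi₀⟩ := finDep_common g
        refine ⟨⟨fun ω => Structure.funMap f fun i => (g i).1 ω, i₀, fun ω ω' h => ?_⟩, ?_⟩
        · dsimp only
          congr 1
          funext i
          exact hi₀ i ω ω' h
        · have e : xs = fun i => mk (g i).1 := funext fun i => (hg i).symm
          rw [e]
          exact (Ultraproduct.funMap_cast (u := F) (M := fun _ => A) f fun i => (g i).1).symm }
  have hS : S.IsElementary := by
    apply Substructure.isElementary_of_exists
    intro n φ xs a ha
    have hx : ∀ i, ∃ f : FinDep Y A, mk f.1 = (xs i : PW) := fun i => (xs i).2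
    choose g hg using hx
    obtain ⟨h, hh⟩ : ∃ h : (ℕ → Y) → A, mk h = a := Quotient.exists_rep a
    have los : ∀ h : (ℕ → Y) → A, φ.Realize (default : Empty → PW)
        (Fin.snoc ((↑) ∘ xs) (mk h)) ↔
        ∀ᶠ ω in (F : Filter (ℕ → Y)), φ.Realize (default : Empty → A)
          (Fin.snoc (fun i => (g i).1 ω) (h ω) : Fin (n + 1) → A) := by
      intro h
      have key := Ultraproduct.boundedFormula_realize_cast (u := F) (M := fun _ => A) φ
        (fun e : Empty => e.elim) (Fin.snoc (α := fun _ => (ℕ → Y) → A) (fun i => (g i).1) h)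
      refine Iff.trans (iff_of_eq ?_) (key.trans ?_)
      · refine congrArg₂ (fun a b => BoundedFormula.Realize φ a b) (Subsingleton.elim _ _) ?_
        funext i
        refine Fin.lastCases ?_ (fun i => ?_) i
        · simp only [Fin.snoc_last]; rfl
        · simp only [Fin.snoc_castSucc, Function.comp]
          exact (hg i).symm
      · refine Filter.eventually_congr (Filter.Eventually.of_forall fun ω => iff_of_eq ?_)
        refine congrArg₂ (fun a b => BoundedFormula.Realize φ a b) (Subsingleton.elim _ _) ?_
        funext i
        refine Fin.lastCases ?_ (fun i => ?_) i
        · simp only [Fin.snoc_last]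
        · simp only [Fin.snoc_castSucc]
    obtain ⟨i₀, hi₀⟩ := finDep_common g
    let sk : (Fin n → A) → A := fun v => if h : ∃ a, φ.Realize (default : Empty → A)
      (Fin.snoc v a : Fin (n + 1) → A) then h.choose else Classical.arbitrary A
    refine ⟨⟨mk fun ω => sk fun i => (g i).1 ω, ⟨⟨fun ω => sk fun i => (g i).1 ω, i₀, ?_⟩, rfl⟩⟩, ?_⟩
    · intro ω ω' h
      dsimp only
      congr 1
      funext i
      exact hi₀ i ω ω' h
    · refine (los _).2 ?_
      rw [← hh] at ha
      filter_upwards [(los h).1 ha] with ω hω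
      have : ∃ a, φ.Realize (default : Empty → A)
        (Fin.snoc (fun i => (g i).1 ω) a : Fin (n + 1) → A) := ⟨_, hω⟩
      simp only [sk, dif_pos this]
      exact this.choose_spec
  let S' : L.ElementarySubstructure PW := ⟨S, hS⟩
  refine ⟨S', inferInstance, fun f => ⟨mk f.1, f, rfl⟩, ?_, ?_⟩
  · rintro ⟨_, f, rfl⟩
    exact ⟨f, rfl⟩
  · intro β φ g
    rw [← S'.subtype.map_formula φ]
    exact Ultraproduct.realize_formula_cast (u := F) (M := fun _ => A) φ (fun i => (g i).1)

end FinDepPower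


section CopA

open Filter

variable {L : FirstOrder.Language.{x, y}}

theorem realize_congr_free {N : Type z} [L.Structure N] {β : Type w} [DecidableEq β]
    (φ : L.Formula β) {v v' : β → N}
    (h : ∀ i ∈ BoundedFormula.freeVarFinset φ, v i = v' i) : φ.Realize v ↔ φ.Realize v' := by
  have h1 := BoundedFormula.realize_restrictFreeVar (φ := φ) (f := fun i => i)
    (v := fun i : BoundedFormula.freeVarFinset φ => v i.1)
    (xs := default) v (fun i => rfl)
  have h2 := BoundedFormula.realize_restrictFreeVar (φ := φ) (f := fun i => i)
    (v := fun i : BoundedFormula.freeVarFinset φ => v i.1)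
    (xs := default) v' (fun i => h i.1 i.2)
  exact h1.symm.trans h2

/-- First coordinate functions. -/
def cfa {A : Type z} {m : ℕ} (i : ℕ) (j : Fin m) : FinDep ((Fin m → A) × (Fin m → A)) A :=
  ⟨fun ω => (ω i).1 j, i + 1, fun ω ω' h => by
    dsimp only
    rw [h i (Nat.lt_succ_self i)]⟩

/-- Second coordinate functions. -/
def cfb {A : Type z} {m : ℕ} (i : ℕ) (j : Fin m) : FinDep ((Fin m → A) × (Fin m → A)) A :=
  ⟨fun ω => (ω i).2 j, i + 1, fun ω ω' h => by
    dsimp only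
    rw [h i (Nat.lt_succ_self i)]⟩

theorem copA {A : Type z} [L.Structure A] [Nonempty A] (hA : IsNSOP1Th L A) {m : ℕ}
    (Cl : ∀ n, L.Formula (Fin n × Fin m)) (NE : L.Formula (Fin m ⊕ Fin m))
    (b : List Bool → Fin m → A)
    (hcons : ∀ (n : ℕ) (ν : List Bool) (η : Fin n → List Bool), (∀ i, η i <+: ν) →
      (Cl n).Realize (fun q => b (η q.1) q.2))
    (hinc : ∀ η₁ η₂ : List Bool, (η₁ ++ [false]) <+: η₂ →
      NE.Realize (Sum.elim (b (η₁ ++ [true])) (b η₂))) (n : ℕ) :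
    ∃ c d : Fin n → Fin m → A,
      (∀ k, k ≤ n → (Cl n).Realize (fun q => if q.1.1 < k then d q.1 q.2 else c q.1 q.2)) ∧
      ∀ i k : Fin n, i < k → NE.Realize (Sum.elim (d k) (c i)) := by
  classical
  obtain ⟨F, hF1, hF2⟩ := exists_uf b
  obtain ⟨N, SN, cls, hcls, los'⟩ := finDepPower (L := L) (A := A) F
  have los : ∀ {β : Type} (φ : L.Formula β) (g : β → FinDep _ A),
        φ.Realize (fun i => cls (g i)) ↔
          ∀ᶠ ω in (F : Filter (ℕ → (Fin m → A) × (Fin m → A))),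
            φ.Realize (fun i => (g i).1 ω) := by
    intro β φ g
    have := los' (φ.relabel (ULift.up : β → ULift.{z} β)) (fun i => g i.down)
    simpa only [Formula.realize_relabel, Function.comp_def] using this
  have : Nonempty N := ⟨cls ⟨fun _ => Classical.arbitrary A, 0, fun _ _ _ => rfl⟩⟩
  have hEq : L.completeTheory N = L.completeTheory A := by
    ext θ
    rw [mem_completeTheory, mem_completeTheory]
    have := los (show L.Formula Empty from θ) (fun e => e.elim)
    rw [Sentence.Realize, Sentence.Realize, Subsingleton.elim (default : Empty → N) _,
      Subsingleton.elim (default : Empty → A) (fun e => e.elim)]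
    refine Iff.trans this ?_
    rw [show (fun ω => Formula.Realize (show L.Formula Empty from θ)
      (fun i : Empty => ((Empty.elim i : FinDep ((Fin m → A) × (Fin m → A)) A).1 ω))) = fun _ =>
        Formula.Realize (show L.Formula Empty from θ) (fun e : Empty => (e.elim : A)) from by
          funext ω
          congr 1
          exact Subsingleton.elim _ _]
    exact Filter.eventually_const
  have hNS : NoSOP L N := noSOP_of hA hEq
  let c : ℕ → Fin m → N := fun i j => cls (cfa i j)
  let d : ℕ → Fin m → N := fun i j => cls (cfb i j)
  let H : Ultrafilter ℕ := hyperfilter ℕ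
  let U := H.map c
  let V := H.map d
  have rowN : ∀ φ : L.Formula (N ⊕ (Fin m × Unit)), ∀ᶠ i in (H : Filter ℕ),
      φ.Realize (Sum.elim id fun q => c i q.1) ↔ φ.Realize (Sum.elim id fun q => d i q.1) := by
    intro φ
    choose rep hrep using hcls
    let J := {p : N // (Sum.inl p : N ⊕ (Fin m × Unit)) ∈ BoundedFormula.freeVarFinset φ}
    have : Finite J := Finite.of_injective
      (fun p : J => (⟨Sum.inl p.1, p.2⟩ : BoundedFormula.freeVarFinset φ)) (by
        intro a b h
        apply Subtype.ext
        simpa using congrArg (fun t => t.1) h)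
    obtain ⟨i₀, hi₀⟩ := finDep_common fun p : J => rep p.1
    have : ∀ᶠ i in (H : Filter ℕ), i₀ ≤ i :=
      (Nat.hyperfilter_le_atTop : (H : Filter ℕ) ≤ atTop) (eventually_ge_atTop _)
    filter_upwards [this] with i hi
    let E : List ((Fin m → A) × (Fin m → A)) → (Fin m → A) → Prop := fun h a =>
      φ.Realize (Sum.elim (fun p => (rep p).1 fun j => h.getD j (fun _ => Classical.arbitrary A,
        fun _ => Classical.arbitrary A)) fun q => a q.1)
    have hE : ∀ (ω : ℕ → (Fin m → A) × (Fin m → A)) (a : Fin m → A), E (hist ω i) a ↔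
        φ.Realize (Sum.elim (fun p => (rep p).1 ω) fun q => a q.1) := by
      intro ω a
      apply realize_congr_free
      rintro (p | q) hp
      · apply hi₀ ⟨p, hp⟩
        intro j hj
        simp [hist, List.getD, hj.trans_le hi]
      · rfl
    let rc : N ⊕ (Fin m × Unit) → FinDep ((Fin m → A) × (Fin m → A)) A :=
      Sum.elim rep fun q => (cfa i q.1)
    let rd : N ⊕ (Fin m × Unit) → FinDep ((Fin m → A) × (Fin m → A)) A :=
      Sum.elim rep fun q => (cfb i q.1)
    have e1 : (Sum.elim id fun q => c i q.1 : N ⊕ (Fin m × Unit) → N) = fun t => cls (rc t) := by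
      funext t
      rcases t with t | t
      · exact (hrep t).symm
      · rfl
    have e2 : (Sum.elim id fun q => d i q.1 : N ⊕ (Fin m × Unit) → N) = fun t => cls (rd t) := by
      funext t
      rcases t with t | t
      · exact (hrep t).symm
      · rfl
    rw [e1, e2, los', los']
    apply eventually_congr
    filter_upwards [hF2 E] with ω hω
    have hωi := hω i
    rw [hE, hE] at hωi
    convert hωi using 2
    · funext t
      rcases t with t | t <;> rfl
    · funext t
      rcases t with t | t <;> rfl
  have hUV : Agr L N U V := by
    rintro p ⟨φ, hφ⟩ hp
    have hp' : ∀ᶠ i in (H : Filter ℕ), p (c i) := hp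
    have : ∀ᶠ i in (H : Filter ℕ), p (d i) := by
      filter_upwards [hp', rowN φ] with i h1 h2
      rw [hφ] at h1 ⊢
      exact h2.1 h1
    exact this
  let ClN : (Fin n → Fin m → N) → Prop := fun v => (Cl n).Realize fun q => v q.1 q.2
  let NEN : (Fin m → N) → (Fin m → N) → Prop := fun v w => NE.Realize (Sum.elim v w)
  have hCl : DP L N ClN := by
    refine ⟨(Cl n).relabel fun q => Sum.inr (q.1, (q.2, ())), fun v => ?_⟩
    rw [Formula.realize_relabel]
    rfl
  have hNE : DP2 L N NEN := by
    refine ⟨NE.relabel (Sum.elim (fun q => Sum.inr (Sum.inl (q, ())))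
      (fun q => Sum.inr (Sum.inr (q, ())))), fun v => ?_⟩
    rw [Formula.realize_relabel]
    apply iff_of_eq
    dsimp only [NEN]
    congr 1
    funext t
    rcases t with t | t <;> rfl
  have hchain : ∀ (ω : ℕ → (Fin m → A) × (Fin m → A)), TreeArr b ω → ∀ f : Fin n → ℕ,
      (Cl n).Realize fun q => (ω (f q.1)).1 q.2 := by
    rintro ω ⟨η, h1, h2, -⟩ f
    have hmono : ∀ i j, i ≤ j → η i <+: η j := by
      intro i j hij
      induction j, hij using Nat.le_induction with
      | base => exact List.prefix_rfl
      | succ j _ ih => exact ih.trans (h1 j)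
    have := hcons n (η (Finset.univ.sup f)) (fun i => η (f i))
      (fun i => hmono _ _ (Finset.le_sup (f := f) (Finset.mem_univ i)))
    simpa only [h2] using this
  obtain ⟨c', d', h1, h2⟩ := copThm hNS hUV hCl hNE (K := Set.range c)
    (Filter.Eventually.of_forall (f := (H : Filter ℕ)) (p := fun i => c i ∈ Set.range c)
      fun i => ⟨i, rfl⟩)
    (by
      intro v hv
      choose f hf using hv
      have e : v = fun i => c (f i) := funext fun i => (hf i).symm
      rw [e]
      refine (los (Cl n) (fun q => (cfa (f q.1) q.2))).2 ?_
      filter_upwards [hF1] with ω hω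
      exact hchain ω hω f)
    (by
      have : ∀ᶠ i in (H : Filter ℕ), ∀ᶠ j in (H : Filter ℕ), NEN (d i) (d j) := by
        refine Eventually.of_forall fun i => ?_
        have : ∀ᶠ j in (H : Filter ℕ), i + 1 ≤ j :=
          (Nat.hyperfilter_le_atTop : (H : Filter ℕ) ≤ atTop) (eventually_ge_atTop _)
        filter_upwards [this] with j hj
        have key := los NE (Sum.elim (fun q => (cfb i q)) (fun q => (cfb j q)))
        have e : (Sum.elim (d i) (d j) : Fin m ⊕ Fin m → N) = fun t => cls (Sum.elim
          (fun q => (cfb i q)) (fun q => (cfb j q)) t) := by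
          funext t
          rcases t with t | t <;> rfl
        change NE.Realize _
        rw [e, key]
        filter_upwards [hF1] with ω hω
        obtain ⟨η, -, -, h3⟩ := hω
        obtain ⟨η₁, η₂, hη, ha, hb⟩ := h3 i j hj
        have := hinc η₁ η₂ hη
        rw [← ha, ← hb] at this
        convert this using 1
        funext t
        rcases t with t | t <;> rfl
      exact this)
  choose rep hrep using hcls
  have hc1 : ∀ k : Fin (n + 1), ∀ᶠ ω in (F : Filter (ℕ → (Fin m → A) × (Fin m → A))),
      (Cl n).Realize (fun q => if q.1.1 < k then (rep (d' q.1 q.2)).1 ω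
        else (rep (c' q.1 q.2)).1 ω) := by
    intro k
    have := h1 k (Nat.le_of_lt_succ k.2)
    have e : (fun q : Fin n × Fin m => (if q.1.1 < k.1 then d' q.1 else c' q.1) q.2) =
        fun q => cls (if q.1.1 < k.1 then rep (d' q.1 q.2) else rep (c' q.1 q.2)) := by
      funext q
      split_ifs <;> rw [hrep]
    change (Cl n).Realize (fun q : Fin n × Fin m => (if q.1.1 < k.1 then d' q.1 else c' q.1) q.2)
      at this
    rw [e, los] at this
    filter_upwards [this] with ω hω
    convert hω using 2 with q
    split_ifs <;> rfl
  have hc2 : ∀ p : {p : Fin n × Fin n // p.1 < p.2},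
      ∀ᶠ ω in (F : Filter (ℕ → (Fin m → A) × (Fin m → A))),
      NE.Realize (Sum.elim (fun j => (rep (d' p.1.2 j)).1 ω) (fun j => (rep (c' p.1.1 j)).1 ω)) := by
    intro p
    have := h2 p.1.1 p.1.2 p.2
    have e : (Sum.elim (d' p.1.2) (c' p.1.1) : Fin m ⊕ Fin m → N) = fun t => cls (Sum.elim
        (fun j => rep (d' p.1.2 j)) (fun j => rep (c' p.1.1 j)) t) := by
      funext t
      rcases t with t | t <;> exact (hrep _).symm
    change NE.Realize _ at this
    rw [e, los] at this
    filter_upwards [this] with ω hω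
    convert hω using 1
    funext t
    rcases t with t | t <;> rfl
  obtain ⟨ω, hω1, hω2⟩ := ((eventually_all.2 hc1).and (eventually_all.2 hc2)).exists
  exact ⟨fun i j => (rep (c' i j)).1 ω, fun i j => (rep (d' i j)).1 ω,
    fun k hk => hω1 ⟨k, Nat.lt_succ_of_le hk⟩, fun i k hik => hω2 ⟨(i, k), hik⟩⟩

end CopA


section Final

variable {L : FirstOrder.Language.{u, v}} {𝕄 : Type w} [L.Structure 𝕄]

theorem subst_realize {α : Type w'} {γ : Type} (φ : ParamFormula L 𝕄 (α ⊕ γ)) (c : γ → 𝕄)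
    (xx : α → 𝕄) : (φ.subst c).Realize xx ↔ φ.Realize (Sum.elim xx c) := by
  unfold ParamFormula.Realize ParamFormula.subst
  rw [Formula.realize_relabel]
  apply iff_of_eq
  congr 1
  funext t
  rcases t with (t | t) | t <;> rfl

/-- The formula stating that `n` instances of `φ` are jointly satisfiable. -/
noncomputable def clParam {k m nv : ℕ} (φ : ParamFormula L 𝕄 (Fin k ⊕ (Fin m × Fin nv))) (n : ℕ) :
    ParamFormula L 𝕄 (Fin (n * m) × Fin nv) :=
  ⟨φ.Params, Formula.iExs (Fin k) (Formula.iInf fun i : Fin n => φ.toFormula.relabel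
    (Sum.elim (Sum.elim (fun a => Sum.inr a)
      (fun q => Sum.inl (Sum.inl (finProdFinEquiv (i, q.1), q.2))))
      (fun p => Sum.inl (Sum.inr p)))), φ.params⟩

theorem clParam_realize {k m nv : ℕ} (φ : ParamFormula L 𝕄 (Fin k ⊕ (Fin m × Fin nv))) (n : ℕ)
    (v : Fin (n * m) × Fin nv → 𝕄) :
    (clParam φ n).Realize v ↔ ∃ xx : Fin k → 𝕄, ∀ i : Fin n,
      φ.Realize (Sum.elim xx fun q => v (finProdFinEquiv (i, q.1), q.2)) := by
  unfold ParamFormula.Realize clParam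
  simp only [Formula.realize_iExs, Formula.realize_iInf, Formula.realize_relabel]
  refine exists_congr fun xx => forall_congr' fun i => iff_of_eq ?_
  congr 1
  funext t
  rcases t with (t | t) | t <;> rfl

variable {Ms : Set 𝕄} {nv : ℕ} {P : Set (ParamFormula L 𝕄 (Fin nv))}

/-- The corresponding formula of the internal language. -/
noncomputable def clForm {k m : ℕ} (φ : ParamFormula L 𝕄 (Fin k ⊕ (Fin m × Fin nv)))
    (hφ : φ.ParamsIn Ms) (n : ℕ) : (pLang L 𝕄 Ms nv).Formula (Fin n × Fin m) :=
  Relations.formula (L := pLang L 𝕄 Ms nv) (n := n * m) ⟨clParam φ n, hφ⟩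
    (fun t => Term.var (finProdFinEquiv.symm t))

theorem clForm_realize {k m : ℕ} (φ : ParamFormula L 𝕄 (Fin k ⊕ (Fin m × Fin nv)))
    (hφ : φ.ParamsIn Ms) (n : ℕ) (v : Fin n × Fin m → PRealizations L 𝕄 P) :
    (clForm φ hφ n).Realize v ↔ ∃ xx : Fin k → 𝕄, ∀ i : Fin n,
      φ.Realize (Sum.elim xx fun q => (v (i, q.1)).1 q.2) := by
  refine Iff.trans (Formula.realize_rel (L := pLang L 𝕄 Ms nv)) ?_
  refine Iff.trans (clParam_realize φ n _) ?_
  simp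

/-- The formula stating that two instances of `φ` are inconsistent. -/
noncomputable def neForm {k m : ℕ} (φ : ParamFormula L 𝕄 (Fin k ⊕ (Fin m × Fin nv)))
    (hφ : φ.ParamsIn Ms) : (pLang L 𝕄 Ms nv).Formula (Fin m ⊕ Fin m) :=
  Formula.not ((clForm φ hφ 2).relabel fun q => if q.1 = 0 then Sum.inl q.2 else Sum.inr q.2)

theorem neForm_realize {k m : ℕ} (φ : ParamFormula L 𝕄 (Fin k ⊕ (Fin m × Fin nv)))
    (hφ : φ.ParamsIn Ms) (v v' : Fin m → PRealizations L 𝕄 P) :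
    (neForm φ hφ).Realize (Sum.elim v v') ↔ ¬∃ xx : Fin k → 𝕄,
      φ.Realize (Sum.elim xx fun q => (v q.1).1 q.2) ∧
      φ.Realize (Sum.elim xx fun q => (v' q.1).1 q.2) := by
  unfold neForm
  rw [Formula.realize_not, Formula.realize_relabel, clForm_realize]
  simp [Fin.forall_fin_two]

/-- Satisfaction of the relation used for SOP₃. -/
def sopRel {k : ℕ} {B : Type*} (ρ : (Fin k → 𝕄) → B → Prop) (e e' : (Fin k → 𝕄) × B × B) : Prop :=
  ρ e.1 e'.2.1 ∧ ρ e'.1 e.2.2 ∧ ¬∃ xx, ρ xx e.2.1 ∧ ρ xx e'.2.2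

theorem sopRel_no_cycle {k : ℕ} {B : Type*} (ρ : (Fin k → 𝕄) → B → Prop)
    (e₁ e₂ e₃ : (Fin k → 𝕄) × B × B) (h1 : sopRel ρ e₁ e₂) (h2 : sopRel ρ e₂ e₃)
    (h3 : sopRel ρ e₃ e₁) : False :=
  h1.2.2 ⟨e₃.1, h3.1, h2.2.1⟩

/-- The index type of the tuples used for SOP₃. -/
abbrev SIx (k m nv : ℕ) : Type := Fin k ⊕ ((Fin m × Fin nv) ⊕ (Fin m × Fin nv))

/-- Decompose a tuple. -/
def unpk {k m nv : ℕ} (a : SIx k m nv → 𝕄) :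
    (Fin k → 𝕄) × (Fin m × Fin nv → 𝕄) × (Fin m × Fin nv → 𝕄) :=
  (fun t => a (Sum.inl t), fun t => a (Sum.inr (Sum.inl t)), fun t => a (Sum.inr (Sum.inr t)))

/-- The defining formula of the relation used for SOP₃. -/
noncomputable def sopForm {k m : ℕ} (φ : ParamFormula L 𝕄 (Fin k ⊕ (Fin m × Fin nv))) :
    L.Formula ((SIx k m nv ⊕ SIx k m nv) ⊕ φ.Params) :=
  (φ.toFormula.relabel (Sum.elim (Sum.elim (fun t => Sum.inl (Sum.inl (Sum.inl t)))
      (fun t => Sum.inl (Sum.inr (Sum.inr (Sum.inl t))))) Sum.inr)) ⊓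
  ((φ.toFormula.relabel (Sum.elim (Sum.elim (fun t => Sum.inl (Sum.inr (Sum.inl t)))
      (fun t => Sum.inl (Sum.inl (Sum.inr (Sum.inr t))))) Sum.inr)) ⊓
  Formula.not (Formula.iExs (Fin k)
    ((φ.toFormula.relabel (Sum.elim (Sum.elim (fun t => Sum.inr t)
      (fun t => Sum.inl (Sum.inl (Sum.inl (Sum.inr (Sum.inl t))))))
      (fun p => Sum.inl (Sum.inr p)))) ⊓
    (φ.toFormula.relabel (Sum.elim (Sum.elim (fun t => Sum.inr t)
      (fun t => Sum.inl (Sum.inl (Sum.inr (Sum.inr (Sum.inr t))))))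
      (fun p => Sum.inl (Sum.inr p)))))))

theorem sopForm_realize {k m : ℕ} (φ : ParamFormula L 𝕄 (Fin k ⊕ (Fin m × Fin nv)))
    (a a' : SIx k m nv → 𝕄) :
    (sopForm φ).Realize (Sum.elim (Sum.elim a a') φ.params) ↔
      sopRel (fun xx c => φ.Realize (Sum.elim xx c)) (unpk a) (unpk a') := by
  unfold sopForm sopRel ParamFormula.Realize
  simp only [Formula.realize_inf, Formula.realize_not, Formula.realize_iExs,
    Formula.realize_relabel]
  refine and_congr (iff_of_eq ?_) (and_congr (iff_of_eq ?_) (not_congr (exists_congr fun xx =>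
    and_congr (iff_of_eq ?_) (iff_of_eq ?_)))) <;>
  · congr 1
    funext t
    rcases t with (t | t) | t <;> rfl

theorem ofFn_of_pre {ν η : List Bool} (h : η <+: ν) :
    η = List.ofFn fun i : Fin η.length => ν.getD i false := by
  apply List.ext_getElem
  · simp
  · intro i h1 h2
    obtain ⟨t, rfl⟩ := h
    simp [List.getD, List.getElem?_append_left h1, List.getElem?_eq_getElem h1]

end Final

theorem main_thm
    (L : FirstOrder.Language.{u, v}) (𝕄 : Type w) [L.Structure 𝕄]
    (κ : Cardinal.{w}) [IsMonster L 𝕄 κ]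
    (M : L.ElementarySubstructure 𝕄) (hMsmall : Cardinal.mk ↥(M : Set 𝕄) < κ)
    {nv : ℕ} (P : Set (ParamFormula L 𝕄 (Fin nv)))
    (hNSOP3 : IsNSOP3 L 𝕄)
    (hInternal : IsNSOP1Th (pLang L 𝕄 (M : Set 𝕄) nv) (PRealizations L 𝕄 P)) :
    CoNSOP1 L 𝕄 (M : Set 𝕄) P := by
  classical
  rintro ⟨k, m, φ, b, hφ, hb, hc, hi⟩
  have hchain : ∀ ν : List Bool, ∃ xx : Fin k → 𝕄, ∀ η, η <+: ν →
      φ.Realize (Sum.elim xx (flat (b η))) := by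
    intro ν
    obtain ⟨xx, hxx⟩ := hc (fun i => ν.getD i false) (Finset.range (ν.length + 1))
    refine ⟨xx, fun η hη => ?_⟩
    have := hxx η.length (by
      have := hη.length_le
      simp; omega)
    dsimp only at this
    rw [subst_realize, ← ofFn_of_pre hη] at this
    exact this
  have hinc : ∀ η₁ η₂ : List Bool, (η₁ ++ [false]) <+: η₂ →
      ¬∃ xx : Fin k → 𝕄, φ.Realize (Sum.elim xx (flat (b η₂))) ∧
        φ.Realize (Sum.elim xx (flat (b (η₁ ++ [true])))) := by
    intro η₁ η₂ h
    simpa only [subst_realize] using hi η₁ η₂ h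
  have hInf : Infinite 𝕄 := by
    by_contra hfin
    rw [not_infinite_iff_finite] at hfin
    have key : ∀ i j, i < j → b (List.replicate i false ++ [true]) ≠
        b (List.replicate j false ++ [true]) := by
      intro i j hij he
      refine hinc (List.replicate i false) (List.replicate j false ++ [true]) ?_ ?_
      · obtain ⟨r, rfl⟩ : ∃ r, j = i + 1 + r := ⟨j - i - 1, by omega⟩
        exact ⟨List.replicate r false ++ [true], by simp [List.replicate_add]⟩
      · rw [he]
        obtain ⟨xx, hxx⟩ := hchain (List.replicate j false ++ [true])
        exact ⟨xx, hxx _ List.prefix_rfl, hxx _ List.prefix_rfl⟩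
    obtain ⟨i, j, hij, he⟩ := Finite.exists_ne_map_eq_of_infinite
      (fun i : ℕ => b (List.replicate i false ++ [true]))
    rcases lt_or_gt_of_ne hij with h | h
    · exact key i j h he
    · exact key j i h he.symm
  have hMinf : Infinite M := (ElementarySubstructure.elementarilyEquivalent M).infinite_iff.2 hInf
  have hκ : Cardinal.aleph0 < κ := lt_of_le_of_lt (Cardinal.aleph0_le_mk M) hMsmall
  have hA : Nonempty (PRealizations L 𝕄 P) := by
    rcases Nat.eq_zero_or_pos m with rfl | hm
    · exfalso
      refine hinc [] [false] List.prefix_rfl ?_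
      obtain ⟨xx, hxx⟩ := hchain [false]
      have e : flat (b ([] ++ [true])) = flat (b [false]) := funext fun q => q.1.elim0
      rw [e]
      exact ⟨xx, hxx _ List.prefix_rfl, hxx _ List.prefix_rfl⟩
    · exact ⟨⟨b [] ⟨0, hm⟩, hb _ _⟩⟩
  have cop := copA hInternal (m := m) (clForm φ hφ) (neForm φ hφ)
    (fun η j => ⟨b η j, hb η j⟩)
    (by
      intro n ν η hη
      refine (clForm_realize φ hφ n _).2 ?_
      obtain ⟨xx, hxx⟩ := hchain ν
      exact ⟨xx, fun i => hxx _ (hη i)⟩)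
    (by
      intro η₁ η₂ hη
      refine (neForm_realize φ hφ _ _).2 ?_
      rintro ⟨xx, h1, h2⟩
      exact hinc η₁ η₂ hη ⟨xx, h2, h1⟩)
  let ρ : (Fin k → 𝕄) → (Fin m × Fin nv → 𝕄) → Prop := fun xx c => φ.Realize (Sum.elim xx c)
  have fincop : ∀ n : ℕ, ∃ e : Fin n → SIx k m nv → 𝕄, ∀ i j, i < j →
      sopRel ρ (unpk (e i)) (unpk (e j)) := by
    intro n
    obtain ⟨c, d, h1, h2⟩ := cop n
    have h1' : ∀ i : Fin n, ∃ xx : Fin k → 𝕄,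
        (∀ j, j < i → ρ xx fun q => (d j q.1).1 q.2) ∧
        (∀ j, i ≤ j → ρ xx fun q => (c j q.1).1 q.2) := by
      intro i
      have := h1 i.1 i.2.le
      rw [clForm_realize] at this
      obtain ⟨xx, hxx⟩ := this
      refine ⟨xx, fun j hj => ?_, fun j hj => ?_⟩
      · have := hxx j
        simp only [Fin.lt_def.1 hj, if_true] at this
        exact this
      · have := hxx j
        simp only [not_lt.2 (Fin.le_def.1 hj), if_false] at this
        exact this
    choose xx hd hc using h1'
    refine ⟨fun i => Sum.elim (xx i) (Sum.elim (fun q => (c i q.1).1 q.2)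
      (fun q => (d i q.1).1 q.2)), fun i j hij => ⟨hc i j hij.le, hd j i hij, ?_⟩⟩
    have := h2 i j hij
    rw [neForm_realize] at this
    rintro ⟨x', hx1, hx2⟩
    exact this ⟨x', hx2, hx1⟩
  obtain ⟨q, ⟨eq⟩⟩ := Finite.exists_equiv_fin (SIx k m nv)
  let R : ParamFormula L 𝕄 (Fin q ⊕ Fin q) :=
    ⟨φ.Params, (sopForm φ).relabel (Sum.map (Sum.map eq eq) id), φ.params⟩
  have hR : ∀ a a' : Fin q → 𝕄, R.Realize (Sum.elim a a') ↔
      sopRel ρ (unpk fun t => a (eq t)) (unpk fun t => a' (eq t)) := by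
    intro a a'
    rw [← sopForm_realize]
    unfold ParamFormula.Realize
    dsimp only [R]
    rw [Formula.realize_relabel]
    apply iff_of_eq
    congr 1
    funext t
    rcases t with (t | t) | t <;> rfl
  let Rij : ℕ → ℕ → ParamFormula L 𝕄 (ULift.{w} (ℕ × Fin q)) := fun i j =>
    ⟨φ.Params, R.toFormula.relabel (Sum.map (Sum.elim (fun t => ULift.up (i, t))
      (fun t => ULift.up (j, t))) id), φ.params⟩
  have hRij : ∀ (i j : ℕ) (a : ULift.{w} (ℕ × Fin q) → 𝕄), (Rij i j).Realize a ↔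
      R.Realize (Sum.elim (fun t => a (ULift.up (i, t))) (fun t => a (ULift.up (j, t)))) := by
    intro i j a
    unfold ParamFormula.Realize
    dsimp only [Rij]
    rw [Formula.realize_relabel]
    apply iff_of_eq
    congr 1
    funext t
    rcases t with (t | t) | t <;> rfl
  have hcard : Cardinal.mk (ULift.{w} (ℕ × Fin q)) < κ :=
    lt_of_le_of_lt Cardinal.mk_le_aleph0 hκ
  obtain ⟨a, ha⟩ := IsMonster.saturated (L := L) (κ := κ) (M : Set 𝕄)
    {ψ | ∃ i j : ℕ, i < j ∧ ψ = Rij i j} hcard hMsmall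
    (by
      rintro ψ ⟨i, j, -, rfl⟩
      exact hφ)
    (by
      intro S₀ hS₀
      have : ∀ ψ : S₀, ∃ i j : ℕ, i < j ∧ ψ.1 = Rij i j := fun ψ => hS₀ ψ.1 ψ.2
      choose i j hij hψ using this
      obtain ⟨e, he⟩ := fincop (Finset.univ.sup j + 1)
      have hj : ∀ ψ, j ψ < Finset.univ.sup j + 1 := fun ψ =>
        Nat.lt_succ_of_le (Finset.le_sup (f := j) (Finset.mem_univ ψ))
      have hne : Nonempty 𝕄 := inferInstance
      refine ⟨fun t => if h : t.down.1 < Finset.univ.sup j + 1 then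
        e ⟨t.down.1, h⟩ (eq.symm t.down.2) else Classical.arbitrary 𝕄, fun ψ hm => ?_⟩
      have e1 := hψ ⟨ψ, hm⟩
      have h2 := hj ⟨ψ, hm⟩
      have h3 := hij ⟨ψ, hm⟩
      have h1 := h3.trans h2
      change ψ = _ at e1
      rw [e1, hRij, hR]
      simp only [dif_pos h1, dif_pos h2, Equiv.symm_apply_apply]
      exact he ⟨_, h1⟩ ⟨_, h2⟩ h3)
  refine hNSOP3 ⟨q, R, fun i t => a (ULift.up (i, t)), fun i j hij => ?_, ?_⟩
  · rw [← hRij]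
    exact ha _ ⟨i, j, hij, rfl⟩
  · rintro ⟨x1, x2, x3, h1, h2, h3⟩
    rw [hR] at h1 h2 h3
    exact sopRel_no_cycle ρ _ _ _ h1 h2 h3

/-- if `T` is NSOP₃ and `p(x)` is an internally NSOP₁ partial type over
a small model `M`, then `p(x)` is co-NSOP₁. -/
theorem statement_0
    (L : FirstOrder.Language.{u, v}) (𝕄 : Type w) [L.Structure 𝕄]
    (κ : Cardinal.{w}) [IsMonster L 𝕄 κ]
    (M : L.ElementarySubstructure 𝕄) (hMsmall : Cardinal.mk ↥(M : Set 𝕄) < κ)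
    {nv : ℕ} (P : Set (ParamFormula L 𝕄 (Fin nv)))
    (hP : ∀ φ ∈ P, φ.ParamsIn (M : Set 𝕄))
    (hNSOP3 : IsNSOP3 L 𝕄)
    (hInternal : IsNSOP1Th (pLang L 𝕄 (M : Set 𝕄) nv) (PRealizations L 𝕄 P)) :
    CoNSOP1 L 𝕄 (M : Set 𝕄) P := by
  exact main_thm L 𝕄 κ M hMsmall P hNSOP3 hInternal

end NSOP3Paper
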